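/- arXiv:2009.00699 — 5 statements merged into one kernel-verified Lean document; each statement's English description precedes it below -/
import Mathlib

section
/- Let n and k be positive integers with i·n = 7k for some i ∈ {1,2,3} and 2k < n, and suppose that either n ≥ 42 or (n,k) ∈ {(28,8),(35,10),(35,15)}. Then the cop number of the generalised Petersen graph GP(n,k) equals 4. -/
open SimpleGraph

/-- Vertices of the generalised Petersen graph: `Sum.inl j` is the outer vertex `a_j`,
`Sum.inr j` is the inner vertex `b_j`. -/
abbrev GPVertex (n : ℕ) := ZMod n ⊕ ZMod n

/-- The defining relation of the edges of `GP(n,k)`. -/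
def GPRel (n k : ℕ) : GPVertex n → GPVertex n → Prop
  | Sum.inl i, Sum.inl j => j = i + 1
  | Sum.inl i, Sum.inr j => j = i
  | Sum.inr i, Sum.inr j => j = i + (k : ZMod n)
  | _, _ => False

/-- The generalised Petersen graph `GP(n,k)`. -/
def GP (n k : ℕ) : SimpleGraph (GPVertex n) := SimpleGraph.fromRel (GPRel n k)

/-- The closed neighbourhood of a vertex. -/
def closedNbhd {V : Type*} (G : SimpleGraph V) (v : V) : Set V :=
  insert v {w | G.Adj v w}

/-- A configuration of three cops and a robber is trapped. -/
def Trapped {V : Type*} (G : SimpleGraph V) (c₁ c₂ c₃ r : V) : Prop :=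
  (G.Adj c₁ r ∨ G.Adj c₂ r ∨ G.Adj c₃ r) ∨
    ∀ v, G.Adj r v →
      (c₁ ∈ closedNbhd G v ∨ c₂ ∈ closedNbhd G v ∨ c₃ ∈ closedNbhd G v)

/-- The branch of `v` through `u`, relative to the robber position `r`. -/
def branch {V : Type*} (G : SimpleGraph V) (r v u : V) : Set V :=
  insert v {w | G.dist r w ≤ 4 ∧
    ∃ p : G.Walk r w, p.length = G.dist r w ∧ [r, v, u] <+: p.support}

/-- The sequence of cop positions determined by an initial placement, a cop strategy,
and a sequence of robber positions. -/
def copSeq {V : Type*} {m : ℕ} (init : Fin m → V)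
    (move : (Fin m → V) → V → Fin m → V) (r : ℕ → V) : ℕ → Fin m → V
  | 0 => init
  | t + 1 => move (copSeq init move r t) (r t)

/-- The cop player has a winning strategy with `m` cops on `G`. -/
def CopsWinWith {V : Type*} (G : SimpleGraph V) (m : ℕ) : Prop :=
  ∃ (init : Fin m → V) (move : (Fin m → V) → V → Fin m → V),
    (∀ c r i, move c r i = c i ∨ G.Adj (c i) (move c r i)) ∧
    ∀ r : ℕ → V, (∀ t, r (t + 1) = r t ∨ G.Adj (r t) (r (t + 1))) →
      ∃ t i, copSeq init move r t i = r t ∨ copSeq init move r (t + 1) i = r t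

/-- The cop number of a graph. -/
noncomputable def copNumber {V : Type*} (G : SimpleGraph V) : ℕ :=
  sInf {m | CopsWinWith G m}

/-!
Three cops do not suffice: the robber always keeps a neighbour `v` at distance more than two from
every cop. After the cops' move it can step to `v`, or else every neighbour of `v` is guarded, by a
different cop each; it then escapes to or through another neighbour `q`, unless the three cops also
guard the neighbours of `q`. The second possibility is ruled out by a finite check, since up to
distance four `GP(n,k)` looks like its cover in which the outer cycles are unrolled and the inner
cycles have length seven.

Four cops suffice: two cops on the outer cycle close in on the robber from both sides until one of
them matches its position modulo `k`. After two cops have matched it and gone down or up with it,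
any inner step brings the robber closer to one of these two, so it is confined to the outer steps
and spokes, and the remaining two cops close in on it once more.
-/

namespace CopsAndRobbers

section Robber

variable {V : Type*} {G : SimpleGraph V} {m : ℕ}

lemma mem_closedNbhd {v w : V} : w ∈ closedNbhd G v ↔ w = v ∨ G.Adj v w := Iff.rfl

lemma mem_closedNbhd_iff_edist_le_one {v w : V} : w ∈ closedNbhd G v ↔ G.edist v w ≤ 1 := by
  rw [edist_le_one_iff_adj_or_eq, mem_closedNbhd, or_comm, eq_comm]

theorem not_copsWinWith_of_invariant (S : (Fin m → V) → V → Prop)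
    (start : ∀ c, ∃ r, S c r)
    (step : ∀ c r c', S c r → (∀ i, c' i ∈ closedNbhd G (c i)) → ∃ r' ∈ closedNbhd G r, S c' r')
    (safe : ∀ c r, S c r → ∀ i, c i ∉ closedNbhd G r) : ¬ CopsWinWith G m := by
  rintro ⟨init, move, legal, wins⟩
  have respond : ∀ c r, ∃ r', S c r → r' ∈ closedNbhd G r ∧ S (move c r) r' := fun c r ↦ by
    by_cases hS : S c r
    · obtain ⟨r', hr', hS'⟩ := step c r _ hS (legal c r)
      exact ⟨r', fun _ ↦ ⟨hr', hS'⟩⟩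
    · exact ⟨r, fun h ↦ absurd h hS⟩
  choose next hnext using respond
  obtain ⟨r₀, hr₀⟩ := start init
  let state : ℕ → (Fin m → V) × V := Nat.rec (init, r₀) fun _ p ↦ (move p.1 p.2, next p.1 p.2)
  have hcop : ∀ t, copSeq init move (fun t ↦ (state t).2) t = (state t).1 := fun t ↦ by
    induction t with
    | zero => rfl
    | succ t ih => rw [copSeq, ih]
  have hS : ∀ t, S (state t).1 (state t).2 := fun t ↦ by
    induction t with
    | zero => exact hr₀
    | succ t ih => exact (hnext _ _ ih).2
  obtain ⟨t, i, hcatch⟩ := wins (fun t ↦ (state t).2) fun t ↦ (hnext _ _ (hS t)).1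
  rw [hcop, hcop] at hcatch
  refine safe _ _ (hS t) i (hcatch.elim Or.inl fun h ↦ ?_)
  have hmove := legal (state t).1 (state t).2 i
  rw [show move (state t).1 (state t).2 i = (state t).2 from h] at hmove
  exact hmove.imp Eq.symm fun h ↦ h.symm

/-- No vertex within distance two of `v` holds a cop, so that a robber moving to `v` is safe from
the next cop move and from capture there. -/
def Unguarded (G : SimpleGraph V) (c : Fin m → V) (v : V) : Prop := ∀ i, 2 < G.edist v (c i)

/-- A vertex `u` at distance more than `j` from `v` is reached along paths of length at most
`j + 2` through a single neighbour of `v`. -/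
def UniqueBranch (G : SimpleGraph V) (j : ℕ) : Prop :=
  ∀ ⦃v a b u⦄, G.Adj v a → G.Adj v b → G.edist a u ≤ (j + 1 : ℕ) → G.edist b u ≤ (j + 1 : ℕ) →
    j < G.edist v u → a = b

/-- A single cop outside the closed neighbourhoods of `v` and `q` can guard both the neighbour `w`
of `v` and the neighbour `w'` of `q`. -/
def Detour (G : SimpleGraph V) (v q w w' : V) : Prop :=
  ∃ y, G.edist w y ≤ 2 ∧ G.edist w' y ≤ 2 ∧ 1 < G.edist v y ∧ 1 < G.edist q y

/-- Across the two ends of any path `v - r - q` there are no two disjoint detours. -/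
def DetoursShareEnd (G : SimpleGraph V) : Prop :=
  ∀ ⦃r v q⦄, G.Adj r v → G.Adj r q → v ≠ q →
    ∀ ⦃w₁ w₂ q₁ q₂⦄, G.Adj v w₁ → w₁ ≠ r → G.Adj v w₂ → w₂ ≠ r →
      G.Adj q q₁ → q₁ ≠ r → G.Adj q q₂ → q₂ ≠ r →
      Detour G v q w₁ q₁ → Detour G v q w₂ q₂ → w₁ = w₂ ∨ q₁ = q₂

lemma edist_le_add_one_of_adj {v w u : V} {j : ℕ∞} (hadj : G.Adj v w) (h : G.edist w u ≤ j) :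
    G.edist v u ≤ j + 1 := by
  calc G.edist v u ≤ G.edist v w + G.edist w u := G.edist_triangle
    _ ≤ 1 + j := add_le_add (edist_eq_one_iff_adj.mpr hadj).le h
    _ = j + 1 := add_comm 1 j

lemma exists_adj_edist_le {r u : V} {j : ℕ} (hne : r ≠ u) (h : G.edist r u ≤ (j + 1 : ℕ)) :
    ∃ p, G.Adj r p ∧ G.edist p u ≤ j := by
  obtain ⟨w, hw⟩ := exists_walk_of_edist_ne_top (ne_top_of_le_ne_top (ENat.natCast_ne_top _) h)
  cases w with
  | nil => exact absurd rfl hne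
  | cons hadj w =>
    refine ⟨_, hadj, (edist_le w).trans ?_⟩
    rw [← hw, Walk.length_cons, Nat.cast_le] at h
    exact Nat.cast_le.mpr (Nat.le_of_succ_le_succ h)

lemma edist_le_succ_iff {v u : V} {j : ℕ} :
    G.edist v u ≤ (j + 1 : ℕ) ↔ ∃ w ∈ closedNbhd G v, G.edist w u ≤ j := by
  constructor
  · intro h
    by_cases hvu : v = u
    · exact ⟨v, .inl rfl, by simp [hvu]⟩
    · obtain ⟨w, hvw, hw⟩ := exists_adj_edist_le hvu h
      exact ⟨w, .inr hvw, hw⟩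
  · rintro ⟨w, rfl | hvw, hw⟩
    · exact hw.trans (Nat.cast_le.mpr j.le_succ)
    · exact edist_le_add_one_of_adj hvw hw

lemma exists_adj_ne_ne {r : V} (hdeg : 2 < (G.neighborSet r).ncard) (a b : V) :
    ∃ q, G.Adj r q ∧ q ≠ a ∧ q ≠ b := by
  obtain ⟨q, hq, hqab⟩ := Set.exists_mem_notMem_of_ncard_lt_ncard
    (((Set.ncard_insert_le a {b}).trans_eq (by rw [Set.ncard_singleton])).trans_lt hdeg)
  exact ⟨q, hq, by simpa [not_or] using hqab⟩

lemma exists_equiv_guard (hbranch : UniqueBranch G 1) {c : Fin m → V} {v : V}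
    (hdeg : m ≤ (G.neighborSet v).ncard) (hfar : ∀ i, 1 < G.edist v (c i))
    (hguard : ∀ a, G.Adj v a → ¬ Unguarded G c a) :
    ∃ e : G.neighborSet v ≃ Fin m, ∀ a : G.neighborSet v, G.edist a (c (e a)) ≤ 2 := by
  simp only [Unguarded, not_forall, not_lt] at hguard
  choose f hf using fun a : G.neighborSet v ↦ hguard a a.2
  have hinj : f.Injective := fun a b hab ↦ Subtype.ext <|
    hbranch a.2 b.2 (hf a) (hab ▸ hf b) (hfar (f a))
  have hcard : Nat.card (Fin m) ≤ Nat.card (G.neighborSet v) := by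
    rwa [Nat.card_fin, Nat.card_coe_set_eq]
  exact ⟨.ofBijective f (hinj.bijective_of_nat_card_le hcard), hf⟩

lemma guard_unique (hbranch : UniqueBranch G 1) {c : Fin m → V} {r v : V} (hvr : G.Adj v r)
    (hdeg : m ≤ (G.neighborSet v).ncard) (hfar : ∀ i, 1 < G.edist v (c i))
    (hguard : ∀ a, G.Adj v a → ¬ Unguarded G c a) {i j : Fin m} (hi : G.edist r (c i) ≤ 2)
    (hj : G.edist r (c j) ≤ 2) : i = j := by
  obtain ⟨e, he⟩ := exists_equiv_guard hbranch hdeg hfar hguard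
  have he_eq {l : Fin m} (hl : G.edist r (c l) ≤ 2) : e.symm l = ⟨r, hvr⟩ :=
    Subtype.ext (hbranch (e.symm l).2 hvr (by simpa using he (e.symm l)) hl (hfar l))
  exact e.symm.injective ((he_eq hi).trans (he_eq hj).symm)

/-- Otherwise distinct cops guard the neighbours of `v`, and likewise those of `q`; the cop
guarding `r` is the same on both sides, so two of the others provide disjoint detours. -/
theorem exists_unguarded_of_far (hbranch : UniqueBranch G 1) (hdetour : DetoursShareEnd G)
    {c : Fin m → V} {r v q : V} (hrv : G.Adj r v) (hrq : G.Adj r q) (hvq : v ≠ q)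
    (hthree : 2 < (G.neighborSet q).ncard) (hmv : m ≤ (G.neighborSet v).ncard)
    (hmq : m ≤ (G.neighborSet q).ncard) (hv : ∀ i, 1 < G.edist v (c i))
    (hq : ∀ i, 1 < G.edist q (c i)) : ∃ w, (G.Adj v w ∨ G.Adj q w) ∧ Unguarded G c w := by
  by_contra! hguard
  obtain ⟨e, he⟩ := exists_equiv_guard hbranch hmv hv fun a ha ↦ hguard a (.inl ha)
  obtain ⟨e', he'⟩ := exists_equiv_guard hbranch hmq hq fun a ha ↦ hguard a (.inr ha)
  have he_symm (i : Fin m) : G.edist (e.symm i) (c i) ≤ 2 := by simpa using he (e.symm i)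
  have he'_ne (a : G.neighborSet q) (ha : a.1 ≠ r) : (e.symm (e' a)).1 ≠ r := fun h ↦
    ha (hbranch a.2 hrq.symm (he' a) (h ▸ he_symm _) (hq _))
  have detour (a : G.neighborSet q) : Detour G v q (e.symm (e' a)) a :=
    ⟨c (e' a), he_symm _, he' a, hv _, hq _⟩
  obtain ⟨q₁, hqq₁, hq₁r, -⟩ := exists_adj_ne_ne hthree r r
  obtain ⟨q₂, hqq₂, hq₂r, hq₂q₁⟩ := exists_adj_ne_ne hthree r q₁
  rcases hdetour hrv hrq hvq (e.symm _).2 (he'_ne ⟨q₁, hqq₁⟩ hq₁r) (e.symm _).2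
    (he'_ne ⟨q₂, hqq₂⟩ hq₂r) hqq₁ hq₁r hqq₂ hq₂r (detour ⟨q₁, hqq₁⟩) (detour ⟨q₂, hqq₂⟩)
    with hw | hq₁₂
  · have hq₁₂ := e'.injective (e.symm.injective (Subtype.ext hw))
    exact hq₂q₁ (Subtype.mk.inj hq₁₂).symm
  · exact hq₂q₁ hq₁₂.symm

lemma one_lt_edist_iff {v w : V} : 1 < G.edist v w ↔ w ∉ closedNbhd G v := by
  rw [mem_closedNbhd_iff_edist_le_one, not_le]

lemma Unguarded.one_lt_edist {c c' : Fin m → V} {v : V} (hv : Unguarded G c v) (i : Fin m)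
    (hmove : c' i ∈ closedNbhd G (c i)) : 1 < G.edist v (c' i) := by
  refine one_lt_edist_iff.mpr fun hnear ↦ (hv i).not_ge ?_
  rw [mem_closedNbhd_iff_edist_le_one] at hmove hnear
  calc G.edist v (c i) ≤ G.edist v (c' i) + G.edist (c' i) (c i) := G.edist_triangle
    _ ≤ 1 + 1 := by
      gcongr
      rwa [edist_comm]
    _ = 2 := one_add_one_eq_two

/-- If no neighbour of the threatened vertex `v` is free, then a single cop guards `r`. A third
neighbour `q` of `r`, off the short path from `r` to that cop, is far from all cops. -/
theorem exists_unguarded_step (hcycle : UniqueBranch G 0) (hbranch : UniqueBranch G 1)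
    (hdetour : DetoursShareEnd G) (hthree : ∀ v, 2 < (G.neighborSet v).ncard)
    (hm : ∀ v, m ≤ (G.neighborSet v).ncard) {c c' : Fin m → V} {r v : V} (hrv : G.Adj r v)
    (hv : Unguarded G c v) (hmove : ∀ i, c' i ∈ closedNbhd G (c i)) :
    ∃ r' ∈ closedNbhd G r, ∃ w, G.Adj r' w ∧ Unguarded G c' w := by
  have hvfar i : 1 < G.edist v (c' i) := hv.one_lt_edist i (hmove i)
  by_cases hvfree : ∃ w, G.Adj v w ∧ Unguarded G c' w
  · exact ⟨v, .inr hrv, hvfree⟩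
  push Not at hvfree
  obtain ⟨x, hx⟩ : ∃ x, G.edist r (c' x) ≤ 2 := by simpa [Unguarded] using hvfree r hrv.symm
  have hrx : r ≠ c' x := fun h ↦ one_lt_edist_iff.mp (hvfar x) (h ▸ .inr hrv.symm)
  obtain ⟨p, hrp, hpx⟩ := exists_adj_edist_le (j := 1) hrx hx
  obtain ⟨q, hrq, hqv, hqp⟩ := exists_adj_ne_ne (hthree r) v p
  have hqfar i : 1 < G.edist q (c' i) := by
    rw [one_lt_edist_iff, mem_closedNbhd_iff_edist_le_one]
    intro hqi
    obtain rfl : x = i := guard_unique hbranch hrv.symm (hm v) hvfar hvfree hx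
      (edist_le_add_one_of_adj hrq hqi)
    exact hqp (hcycle hrq hrp hqi hpx (edist_pos_of_ne hrx))
  obtain ⟨w, hvw | hqw, hw⟩ := exists_unguarded_of_far hbranch hdetour hrv hrq hqv.symm (hthree q)
    (hm v) (hm q) hvfar hqfar
  · exact ⟨v, .inr hrv, w, hvw, hw⟩
  · exact ⟨q, .inr hrq, w, hqw, hw⟩

theorem not_copsWinWith_of_detoursShareEnd (hcycle : UniqueBranch G 0) (hbranch : UniqueBranch G 1)
    (hdetour : DetoursShareEnd G) (hthree : ∀ v, 2 < (G.neighborSet v).ncard)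
    (hm : ∀ v, m ≤ (G.neighborSet v).ncard) (hstart : ∀ c : Fin m → V, ∃ v, Unguarded G c v) :
    ¬ CopsWinWith G m := by
  refine not_copsWinWith_of_invariant (fun c r ↦ ∃ v, G.Adj r v ∧ Unguarded G c v)
    (fun c ↦ ?_) (fun c r c' ⟨v, hrv, hv⟩ hmove ↦
      exists_unguarded_step hcycle hbranch hdetour hthree hm hrv hv hmove)
    (fun c r ⟨v, hrv, hv⟩ i hi ↦ (hv i).not_ge ?_)
  · obtain ⟨v, hv⟩ := hstart c
    obtain ⟨r, hvr, -⟩ := exists_adj_ne_ne (hthree v) v v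
    exact ⟨r, v, hvr.symm, hv⟩
  · exact edist_le_add_one_of_adj hrv.symm (mem_closedNbhd_iff_edist_le_one.mp hi)

lemma exists_unguarded [Finite V] {b : ℕ} (hball : ∀ u, {v | G.edist u v ≤ 2}.ncard ≤ b)
    (hb : m * b < Nat.card V) (c : Fin m → V) : ∃ v, Unguarded G c v := by
  have hcard : (⋃ i, {v | G.edist (c i) v ≤ 2}).ncard < (Set.univ : Set V).ncard := by
    calc (⋃ i, {v | G.edist (c i) v ≤ 2}).ncard ≤ ∑ i, {v | G.edist (c i) v ≤ 2}.ncard :=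
          Set.ncard_iUnion_le_of_fintype _
      _ ≤ ∑ _i : Fin m, b := Finset.sum_le_sum fun i _ ↦ hball (c i)
      _ = m * b := by simp
      _ < _ := by rwa [Set.ncard_univ]
  obtain ⟨v, -, hv⟩ := Set.exists_mem_notMem_of_ncard_lt_ncard hcard
  exact ⟨v, fun i ↦ not_le.mp fun hi ↦ hv (Set.mem_iUnion.mpr ⟨i, edist_comm.trans_le hi⟩)⟩

end Robber

section Cover

/-- The closed neighbourhoods of the graph on `A ⊕ A` whose outer and inner vertices are joined by
steps of `s` and `t` respectively, and by spokes. Both `GP(n,k)` and its cover below are of this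
form. -/
def nbrs {A : Type*} [AddCommGroup A] [DecidableEq A] (s t : A) : A ⊕ A → Finset (A ⊕ A)
  | .inl x => {.inl x, .inl (x + s), .inl (x - s), .inr x}
  | .inr x => {.inr x, .inr (x + t), .inr (x - t), .inl x}

/-- The vertices reached from a given one by at most `j` steps along the closed neighbourhoods
`N`. -/
def ball {α : Type*} [DecidableEq α] (N : α → Finset α) : ℕ → α → Finset α
  | 0, u => {u}
  | j + 1, u => (N u).biUnion (ball N j)

/-- The vertices of the common cover of the graphs `GP(n,k)` with `n ∣ 7k`: outer cycles are
unrolled to lines, while the inner cycles of length seven are kept. -/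
abbrev CoverVertex := (ℤ × ZMod 7) ⊕ (ℤ × ZMod 7)

/-- Closed neighbourhoods in the cover. -/
abbrev coverNbrs : CoverVertex → Finset CoverVertex := nbrs (1, 0) (0, 1)

/-- Representatives of the vertices of the cover up to translation. -/
def roots : Finset CoverVertex := {.inl 0, .inr 0}

/-- The neighbours of `u` in the cover. -/
def coverAdj (u : CoverVertex) : Finset CoverVertex := (coverNbrs u).erase u

local notation "B" => ball coverNbrs

lemma cover_branch_unique {j : ℕ} (hj : j ≤ 1) : ∀ v ∈ roots, ∀ a ∈ coverAdj v,
    ∀ b ∈ coverAdj v, ∀ u ∈ B (j + 1) a, u ∈ B (j + 1) b → u ∉ B j v → a = b := by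
  interval_cases j <;> decide +kernel

/-- The pairs of neighbours of `v` and `q` other than `r` that are joined by a detour in the
cover, in the sense of `Detour`. -/
def coverDetours (r v q : CoverVertex) : Finset (CoverVertex × CoverVertex) :=
  {p ∈ (coverAdj v).erase r ×ˢ (coverAdj q).erase r |
    ((B 2 p.1 ∩ B 2 p.2) \ (B 1 v ∪ B 1 q)).Nonempty}

lemma cover_detours : ∀ r ∈ roots, ∀ v ∈ coverAdj r, ∀ q ∈ coverAdj r, v ≠ q →
    ∀ p₁ ∈ coverDetours r v q, ∀ p₂ ∈ coverDetours r v q, p₁.1 = p₂.1 ∨ p₁.2 = p₂.2 := by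
  decide +kernel

lemma card_coverAdj : ∀ r ∈ roots, (coverAdj r).card = 3 := by
  decide +kernel

lemma card_ball_two : ∀ r ∈ roots, (B 2 r).card = 10 := by
  decide +kernel

/-- The position of a vertex within its level. -/
def pos {A : Type*} : A ⊕ A → A := Sum.elim id id

/-- The least length of a walk in the cover between two vertices of a common level, outer or
inner, with displacement `d`; unless one coordinate vanishes, it has to leave the level and
return. -/
def walkLength (d : ℤ × ZMod 7) : ℕ :=
  d.1.natAbs + d.2.valMinAbs.natAbs + if d.1 = 0 ∨ d.2 = 0 then 0 else 2

lemma walkLength_le_eight : ∀ z ∈ roots, ∀ u ∈ B 4 z, ∀ v ∈ B 4 z, u.isLeft = v.isLeft →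
    walkLength (pos u - pos v) ≤ 8 := by
  decide +kernel

lemma mem_ball_add {α : Type*} [DecidableEq α] {N : α → Finset α} {i j : ℕ} {u v w : α}
    (huv : v ∈ ball N i u) (hvw : w ∈ ball N j v) : w ∈ ball N (i + j) u := by
  induction i generalizing u with
  | zero => simpa [ball, Finset.mem_singleton.mp huv] using hvw
  | succ i ih =>
    rw [Nat.succ_add]
    simp only [ball, Finset.mem_biUnion] at huv ⊢
    exact huv.imp fun x ⟨hx, hxv⟩ ↦ ⟨hx, ih hxv⟩

lemma mem_ball_of_le {α : Type*} [DecidableEq α] {N : α → Finset α} (hN : ∀ u, u ∈ N u) {i j : ℕ}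
    (hij : i ≤ j) {u v : α} (huv : v ∈ ball N i u) : v ∈ ball N j u := by
  induction hij with
  | refl => exact huv
  | step _ ih => exact Finset.mem_biUnion.mpr ⟨u, hN u, ih⟩

lemma mem_coverNbrs_self (u : CoverVertex) : u ∈ coverNbrs u := by
  rcases u with x | x <;> simp [nbrs]

lemma mem_ball_one_of_mem_coverAdj {u v : CoverVertex} (h : v ∈ coverAdj u) : v ∈ B 1 u :=
  Finset.mem_biUnion.mpr ⟨v, Finset.mem_of_mem_erase h, Finset.mem_singleton_self v⟩

variable {V : Type*} {G : SimpleGraph V} {f : CoverVertex → V} {z : CoverVertex}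

/-- `f` is a graph covering of `G` that is injective up to distance four from `z`. -/
structure IsLocalCover (G : SimpleGraph V) (f : CoverVertex → V) (z : CoverVertex) : Prop where
  closedNbhd_eq : ∀ u, closedNbhd G (f u) = f '' coverNbrs u
  injOn : Set.InjOn f (ball coverNbrs 4 z)

namespace IsLocalCover

lemma edist_le_iff (hf : IsLocalCover G f z) {j : ℕ} {u : CoverVertex} {v : V} :
    G.edist (f u) v ≤ j ↔ ∃ v' ∈ B j u, f v' = v := by
  induction j generalizing u with
  | zero => simp [ball]
  | succ j ih =>
    simp only [edist_le_succ_iff, hf.closedNbhd_eq, Set.exists_mem_image, Finset.mem_coe, ih, ball,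
      Finset.mem_biUnion]
    tauto

lemma exists_mem_coverAdj (hf : IsLocalCover G f z) {u : CoverVertex} {v : V}
    (h : G.Adj (f u) v) : ∃ v' ∈ coverAdj u, f v' = v := by
  have hv : v ∈ closedNbhd G (f u) := .inr h
  rw [hf.closedNbhd_eq] at hv
  obtain ⟨v', hv', rfl⟩ := hv
  exact ⟨v', Finset.mem_erase.mpr ⟨fun h' ↦ h.ne (h' ▸ rfl), hv'⟩, rfl⟩

lemma eq_of_mem_ball (hf : IsLocalCover G f z) {u v : CoverVertex} {i j : ℕ} (hu : u ∈ B i z)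
    (hv : v ∈ B j z) (huv : f u = f v) (hi : i ≤ 4 := by decide) (hj : j ≤ 4 := by decide) :
    u = v :=
  hf.injOn (mem_ball_of_le mem_coverNbrs_self hi hu) (mem_ball_of_le mem_coverNbrs_self hj hv) huv

lemma ncard_neighborSet (hf : IsLocalCover G f z) (hz : z ∈ roots) :
    (G.neighborSet (f z)).ncard = 3 := by
  have himage : G.neighborSet (f z) = f '' coverAdj z := by
    ext v
    refine ⟨hf.exists_mem_coverAdj, ?_⟩
    rintro ⟨v', hv', rfl⟩
    have hclosed : f v' ∈ closedNbhd G (f z) :=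
      hf.closedNbhd_eq z ▸ Set.mem_image_of_mem f (Finset.mem_of_mem_erase hv')
    refine hclosed.resolve_left fun h ↦ Finset.ne_of_mem_erase hv' ?_
    exact hf.eq_of_mem_ball (mem_ball_one_of_mem_coverAdj hv')
      (j := 0) (Finset.mem_singleton_self z) h
  have hinj : Set.InjOn f (coverAdj z) := hf.injOn.mono fun v hv ↦
    mem_ball_of_le mem_coverNbrs_self (by decide) (mem_ball_one_of_mem_coverAdj hv)
  rw [himage, hinj.ncard_image, Set.ncard_coe_finset, card_coverAdj z hz]

lemma ncard_edist_le_two (hf : IsLocalCover G f z) (hz : z ∈ roots) :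
    {v | G.edist (f z) v ≤ 2}.ncard ≤ 10 := by
  calc {v | G.edist (f z) v ≤ 2}.ncard = (f '' B 2 z).ncard :=
        congrArg _ (Set.ext fun v ↦ hf.edist_le_iff)
    _ ≤ _ := Set.ncard_image_le (Finset.finite_toSet _)
    _ = 10 := by rw [Set.ncard_coe_finset, card_ball_two z hz]

end IsLocalCover

/-- Every vertex has a neighbourhood of radius four that looks like that of a vertex of the
cover. -/
def LocallyCovered (G : SimpleGraph V) : Prop :=
  ∀ v, ∃ f, ∃ z ∈ roots, f z = v ∧ IsLocalCover G f z

namespace LocallyCovered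

lemma uniqueBranch (hG : LocallyCovered G) {j : ℕ} (hj : j ≤ 1) : UniqueBranch G j := by
  intro v a b u hva hvb hau hbu hvu
  obtain ⟨f, v, hv, rfl, hf⟩ := hG v
  obtain ⟨a, ha, rfl⟩ := hf.exists_mem_coverAdj hva
  obtain ⟨b, hb, rfl⟩ := hf.exists_mem_coverAdj hvb
  obtain ⟨u₁, hau₁, rfl⟩ := hf.edist_le_iff.mp hau
  obtain ⟨u₂, hbu₂, hu⟩ := hf.edist_le_iff.mp hbu
  obtain rfl := hf.eq_of_mem_ball (mem_ball_add (mem_ball_one_of_mem_coverAdj hb) hbu₂)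
    (mem_ball_add (mem_ball_one_of_mem_coverAdj ha) hau₁) hu (by lia) (by lia)
  refine congrArg f (cover_branch_unique hj v hv a ha b hb u₂ hau₁ hbu₂ fun hvu₂ ↦ ?_)
  exact hvu.not_ge (hf.edist_le_iff.mpr ⟨u₂, hvu₂, rfl⟩)

lemma detoursShareEnd (hG : LocallyCovered G) : DetoursShareEnd G := by
  intro r v q hrv hrq hvq
  obtain ⟨f, r, hr, rfl, hf⟩ := hG r
  obtain ⟨v, hv, rfl⟩ := hf.exists_mem_coverAdj hrv
  obtain ⟨q, hq, rfl⟩ := hf.exists_mem_coverAdj hrq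
  have lift_detour {w q'} (hvw : G.Adj (f v) w) (hwr : w ≠ f r) (hqq' : G.Adj (f q) q')
      (hq'r : q' ≠ f r) (hd : Detour G (f v) (f q) w q') :
      ∃ p ∈ coverDetours r v q, f p.1 = w ∧ f p.2 = q' := by
    obtain ⟨w, hw, rfl⟩ := hf.exists_mem_coverAdj hvw
    obtain ⟨q', hq', rfl⟩ := hf.exists_mem_coverAdj hqq'
    obtain ⟨y, hwy, hq'y, hvy, hqy⟩ := hd
    obtain ⟨y₁, hwy₁, rfl⟩ := (hf.edist_le_iff (j := 2)).mp hwy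
    obtain ⟨y₂, hq'y₂, hy⟩ := (hf.edist_le_iff (j := 2)).mp hq'y
    have mem_ball_four {u w y} (hu : u ∈ coverAdj r) (hw : w ∈ coverAdj u) (hy : y ∈ B 2 w) :
        y ∈ B 4 r :=
      mem_ball_add (mem_ball_one_of_mem_coverAdj hu)
        (mem_ball_add (mem_ball_one_of_mem_coverAdj hw) hy)
    obtain rfl := hf.injOn (mem_ball_four hq hq' hq'y₂) (mem_ball_four hv hw hwy₁) hy
    have not_mem_ball_one {u} (hu : 1 < G.edist (f u) (f y₂)) : y₂ ∉ B 1 u := fun h ↦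
      hu.not_ge ((hf.edist_le_iff (j := 1)).mpr ⟨y₂, h, rfl⟩)
    refine ⟨(w, q'), Finset.mem_filter.mpr ⟨Finset.mk_mem_product ?_ ?_, y₂, ?_⟩, rfl, rfl⟩
    · exact Finset.mem_erase.mpr ⟨fun h ↦ hwr (h ▸ rfl), hw⟩
    · exact Finset.mem_erase.mpr ⟨fun h ↦ hq'r (h ▸ rfl), hq'⟩
    · simp [hwy₁, hq'y₂, not_mem_ball_one hvy, not_mem_ball_one hqy]
  intro w₁ w₂ q₁ q₂ hw₁ hw₁r hw₂ hw₂r hq₁ hq₁r hq₂ hq₂r hd₁ hd₂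
  obtain ⟨p₁, hp₁, rfl, rfl⟩ := lift_detour hw₁ hw₁r hq₁ hq₁r hd₁
  obtain ⟨p₂, hp₂, rfl, rfl⟩ := lift_detour hw₂ hw₂r hq₂ hq₂r hd₂
  exact (cover_detours r hr v hv q hq (fun h ↦ hvq (h ▸ rfl)) p₁ hp₁ p₂ hp₂).imp
    (congrArg f) (congrArg f)

theorem not_copsWinWith [Finite V] (hG : LocallyCovered G) (hV : 30 < Nat.card V) {m : ℕ}
    (hm : m ≤ 3) : ¬ CopsWinWith G m := by
  have ncard_neighborSet v : (G.neighborSet v).ncard = 3 := by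
    obtain ⟨f, z, hz, rfl, hf⟩ := hG v
    exact hf.ncard_neighborSet hz
  refine not_copsWinWith_of_detoursShareEnd (hG.uniqueBranch zero_le_one) (hG.uniqueBranch le_rfl)
    hG.detoursShareEnd (fun v ↦ by simp [ncard_neighborSet]) (fun v ↦ by rwa [ncard_neighborSet])
    (exists_unguarded (b := 10) (fun u ↦ ?_) (by lia))
  obtain ⟨f, z, hz, rfl, hf⟩ := hG u
  exact hf.ncard_edist_le_two hz

end LocallyCovered

lemma coe_nbrs_map {A A' : Type*} [AddCommGroup A] [AddCommGroup A'] [DecidableEq A]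
    [DecidableEq A'] (φ : A →+ A') (x : A') (s t : A) (u : A ⊕ A) :
    (nbrs (φ s) (φ t) (Sum.map (x + φ ·) (x + φ ·) u) : Set (A' ⊕ A')) =
      Sum.map (x + φ ·) (x + φ ·) '' nbrs s t u := by
  rcases u with y | y <;> simp [nbrs, Set.image_insert_eq, add_assoc, add_sub_assoc]

lemma closedNbhd_GP (n k : ℕ) (u : GPVertex n) :
    closedNbhd (GP n k) u = nbrs (1 : ZMod n) (k : ZMod n) u := by
  ext v
  rcases u with x | x <;> rcases v with y | y <;>
    grind [mem_closedNbhd, GP, fromRel_adj, GPRel, nbrs]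

/-- The homomorphism from the positions of the cover to those of `GP(n,k)`, which sends a step of
a level of the cover to a step of the same level. -/
def coverHom {n k : ℕ} (h : 7 * (k : ZMod n) = 0) : ℤ × ZMod 7 →+ ZMod n :=
  (Int.castAddHom (ZMod n)).coprod <| ZMod.lift 7 ⟨zmultiplesHom _ (k : ZMod n), by simpa using h⟩

lemma coverHom_apply {n k : ℕ} (h : 7 * (k : ZMod n) = 0) (d : ℤ × ZMod 7) :
    coverHom h d = (d.1 + d.2.valMinAbs * k : ℤ) := by
  have lift_apply (f : {f : ℤ →+ ZMod n // f (7 : ℕ) = 0}) :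
      ZMod.lift 7 f d.2 = f.1 d.2.valMinAbs := by
    conv_lhs => rw [← d.2.coe_valMinAbs, ZMod.lift_coe]
  simp [coverHom, lift_apply]

lemma coverHom_outer {n k : ℕ} (h : 7 * (k : ZMod n) = 0) : coverHom h (1, 0) = 1 := by
  simp [coverHom_apply]

lemma coverHom_inner {n k : ℕ} (h : 7 * (k : ZMod n) = 0) : coverHom h (0, 1) = k := by
  simp [coverHom_apply, show (1 : ZMod 7).valMinAbs = 1 from rfl]

theorem locallyCovered_GP {n k : ℕ} (h : 7 * (k : ZMod n) = 0)
    (hker : ∀ d, coverHom h d = 0 → walkLength d ≤ 8 → d = 0) : LocallyCovered (GP n k) := by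
  have isLocalCover (x : ZMod n) {z} (hz : z ∈ roots) :
      IsLocalCover (GP n k) (Sum.map (x + coverHom h ·) (x + coverHom h ·)) z := by
    refine ⟨fun u ↦ ?_, fun u hu v hv huv ↦ ?_⟩
    · rw [closedNbhd_GP, ← coe_nbrs_map, coverHom_inner, coverHom_outer]
    · have hlevel : u.isLeft = v.isLeft := by simpa using congrArg Sum.isLeft huv
      have hpos : pos u - pos v = 0 := by
        refine hker _ ?_ (walkLength_le_eight z hz u hu v hv hlevel)
        rw [map_sub, sub_eq_zero]
        rcases u with u | u <;> rcases v with v | v <;> simp_all [pos]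
      rcases u with u | u <;> rcases v with v | v <;> simp_all [pos, sub_eq_zero]
  rintro (x | x)
  · exact ⟨_, .inl 0, by simp [roots], by simp, isLocalCover x (by simp [roots])⟩
  · exact ⟨_, .inr 0, by simp [roots], by simp, isLocalCover x (by simp [roots])⟩

lemma dvd_add_mul_of_coverHom_eq_zero {m i : ℕ} (hm : m ≠ 0)
    (h : 7 * ((i * m : ℕ) : ZMod (7 * m)) = 0) {d : ℤ × ZMod 7} (hd : coverHom h d = 0) :
    ∃ p, d.1 = m * p ∧ 7 ∣ p + d.2.valMinAbs * i := by
  rw [coverHom_apply, ZMod.intCast_zmod_eq_zero_iff_dvd, Nat.cast_mul, Nat.cast_mul] at hd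
  obtain ⟨p, hp⟩ : (m : ℤ) ∣ d.1 := by
    exact (dvd_add_left (dvd_mul_of_dvd_right (dvd_mul_left _ _) _)).mp (dvd_of_mul_left_dvd hd)
  refine ⟨p, hp, ?_⟩
  rw [hp, show m * p + d.2.valMinAbs * (i * m) = (p + d.2.valMinAbs * i) * (m : ℤ) by ring] at hd
  exact Int.dvd_of_mul_dvd_mul_right (by exact_mod_cast hm) hd

/-- A nonzero kernel element of walk length at most eight would have first coordinate `±m`, and
then second coordinate of absolute value `1`, `3`, `2` for `i = 1`, `2`, `3`, which is too long. -/
lemma eq_zero_of_coverHom_eq_zero {m i : ℕ} (hi : i = 1 ∨ i = 2 ∨ i = 3)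
    (hm : 6 ≤ m ∨ m = 4 ∧ i = 2 ∨ m = 5 ∧ (i = 2 ∨ i = 3))
    (h : 7 * ((i * m : ℕ) : ZMod (7 * m)) = 0) (d : ℤ × ZMod 7) (hd : coverHom h d = 0)
    (hwalk : walkLength d ≤ 8) : d = 0 := by
  have hm₀ : 4 ≤ m := by lia
  obtain ⟨p, hp, hdvd⟩ := dvd_add_mul_of_coverHom_eq_zero (by lia) h hd
  obtain ⟨P, Q⟩ := d
  dsimp only at hp hdvd
  simp only [walkLength, hp, Int.natAbs_mul, Int.natAbs_natCast] at hwalk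
  obtain ⟨hQ_gt, hQ_le⟩ := Q.valMinAbs_mem_Ioc
  have hmp : m * p.natAbs ≤ 8 := by lia
  by_cases hp₀ : p = 0
  · have hQ₀ : Q.valMinAbs = 0 := by rcases hi with rfl | rfl | rfl <;> omega
    rw [hp, hp₀, mul_zero, (ZMod.valMinAbs_eq_zero Q).mp hQ₀, Prod.mk_zero_zero]
  · exfalso
    have hp_pos : 1 ≤ p.natAbs := by lia
    by_cases hQ₀ : Q = 0
    · have : 7 ≤ p.natAbs := by
        rw [hQ₀, ZMod.valMinAbs_zero, zero_mul, add_zero] at hdvd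
        omega
      have := Nat.mul_le_mul hm₀ this
      lia
    · have hmp₀ : (m : ℤ) * p ≠ 0 := mul_ne_zero (by lia) hp₀
      rw [if_neg (not_or.mpr ⟨hmp₀, hQ₀⟩)] at hwalk
      have hp_one : p.natAbs = 1 := by
        by_contra hp_one
        have := Nat.mul_le_mul hm₀ (show 2 ≤ p.natAbs by lia)
        lia
      rw [hp_one] at hwalk
      rcases hm with hm | ⟨rfl, rfl⟩ | ⟨rfl, rfl | rfl⟩ <;> lia

end Cover

section Cops

variable {V : Type*} {G : SimpleGraph V} {m : ℕ}

/-- The cops at `c`, to move, can be adjacent to a robber at `r` or on top of it, with the cops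
to move, after at most `N` rounds. -/
def CopsWinIn (G : SimpleGraph V) : ℕ → (Fin m → V) → V → Prop
  | 0, c, r => ∃ i, r ∈ closedNbhd G (c i)
  | N + 1, c, r => CopsWinIn G N c r ∨ ∃ c' : Fin m → V,
      (∀ i, c' i ∈ closedNbhd G (c i)) ∧ ∀ r' ∈ closedNbhd G r, CopsWinIn G N c' r'

lemma CopsWinIn.mono {M N : ℕ} (hMN : M ≤ N) {c : Fin m → V} {r : V} (h : CopsWinIn G M c r) :
    CopsWinIn G N c r :=
  Nat.le_induction h (fun _ _ ih ↦ .inl ih) N hMN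

lemma CopsWinIn.comp_perm (σ : Equiv.Perm (Fin m)) {N : ℕ} {c : Fin m → V} {r : V}
    (h : CopsWinIn G N c r) : CopsWinIn G N (c ∘ σ) r := by
  induction N generalizing c r with
  | zero =>
    obtain ⟨i, hi⟩ := h
    exact ⟨σ.symm i, by simpa using hi⟩
  | succ N ih =>
    exact h.imp ih fun ⟨c', legal, hc'⟩ ↦
      ⟨c' ∘ σ, fun i ↦ legal (σ i), fun r' hr' ↦ ih (hc' r' hr')⟩

/-- The cops at `c`, to move, can force the capture of a robber at `r`. -/
def CopsForce (G : SimpleGraph V) (c : Fin m → V) (r : V) : Prop := ∃ N, CopsWinIn G N c r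

namespace CopsForce

lemma of_mem {c : Fin m → V} {r : V} (i : Fin m) (h : r ∈ closedNbhd G (c i)) : CopsForce G c r :=
  ⟨0, i, h⟩

lemma step [Finite V] {c c' : Fin m → V} {r : V} (legal : ∀ i, c' i ∈ closedNbhd G (c i))
    (h : ∀ r' ∈ closedNbhd G r, CopsForce G c' r') : CopsForce G c r := by
  choose! rank hrank using h
  obtain ⟨N, hN⟩ := (Set.finite_range rank).bddAbove
  exact ⟨N + 1, .inr ⟨c', legal, fun r' hr' ↦ (hrank r' hr').mono (hN ⟨r', rfl⟩)⟩⟩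

lemma comp_perm (σ : Equiv.Perm (Fin m)) {c : Fin m → V} {r : V} (h : CopsForce G c r) :
    CopsForce G (c ∘ σ) r :=
  h.imp fun _ ↦ .comp_perm σ

variable {a b c d r : V}

lemma step_four [Finite V] {a' b' c' d' : V} (ha : a' ∈ closedNbhd G a) (hb : b' ∈ closedNbhd G b)
    (hc : c' ∈ closedNbhd G c) (hd : d' ∈ closedNbhd G d)
    (h : ∀ r' ∈ closedNbhd G r, CopsForce G ![a', b', c', d'] r') :
    CopsForce G ![a, b, c, d] r :=
  step (by simp [Fin.forall_fin_succ, ha, hb, hc, hd]) h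

lemma swap_zero_one (h : CopsForce G ![a, b, c, d] r) : CopsForce G ![b, a, c, d] r := by
  convert h.comp_perm (Equiv.swap 0 1) using 1
  ext i; fin_cases i <;> rfl

lemma swap_one_two (h : CopsForce G ![a, b, c, d] r) : CopsForce G ![a, c, b, d] r := by
  convert h.comp_perm (Equiv.swap 1 2) using 1
  ext i; fin_cases i <;> rfl

lemma swap_one_three (h : CopsForce G ![a, b, c, d] r) : CopsForce G ![a, d, c, b] r := by
  convert h.comp_perm (Equiv.swap 1 3) using 1
  ext i; fin_cases i <;> rfl

end CopsForce

/-- The cops always move so as to decrease the least number of rounds within which they win. -/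
theorem copsWinWith_of_copsForce (init : Fin m → V) (h : ∀ r, CopsForce G init r) :
    CopsWinWith G m := by
  classical
  have reply (c : Fin m → V) (r : V) : ∃ c' : Fin m → V, (∀ i, c' i ∈ closedNbhd G (c i)) ∧
      ∀ N, CopsWinIn G N c r → (∃ i, c' i = r) ∨
        ∃ M < N, ∀ r' ∈ closedNbhd G r, CopsWinIn G M c' r' := by
    by_cases hwin : CopsForce G c r
    · have hspec := Nat.find_spec hwin
      rcases hfind : Nat.find hwin with _ | M <;> rw [hfind] at hspec
      · obtain ⟨i, hi⟩ := hspec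
        refine ⟨Function.update c i r, fun j ↦ ?_, fun _ _ ↦ .inl ⟨i, by simp⟩⟩
        obtain rfl | hj := eq_or_ne j i
        · simpa using hi
        · rw [Function.update_of_ne hj]
          exact .inl rfl
      · obtain ⟨c', legal, hc'⟩ := hspec.resolve_left (Nat.find_min hwin (hfind ▸ M.lt_succ_self))
        exact ⟨c', legal, fun N hN ↦ .inr ⟨M, hfind.ge.trans (Nat.find_min' hwin hN), hc'⟩⟩
    · exact ⟨c, fun i ↦ .inl rfl, fun N hN ↦ (hwin ⟨N, hN⟩).elim⟩
  choose move legal progress using reply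
  refine ⟨init, move, legal, fun r hr ↦ ?_⟩
  have capture (N t : ℕ) (hwin : CopsWinIn G N (copSeq init move r t) (r t)) :
      ∃ t i, copSeq init move r t i = r t ∨ copSeq init move r (t + 1) i = r t := by
    induction N using Nat.strong_induction_on generalizing t with
    | _ N ih =>
      obtain ⟨i, hi⟩ | ⟨M, hMN, hM⟩ := progress _ _ N hwin
      · exact ⟨t, i, .inr hi⟩
      · exact ih M hMN (t + 1) (hM _ (hr t))
  obtain ⟨N, hN⟩ := h (r 0)
  exact capture N 0 hN

end Cops

section FourCops

variable {n k : ℕ}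

lemma mem_closedNbhd_inl {x : ZMod n} {v : GPVertex n} : v ∈ closedNbhd (GP n k) (.inl x) ↔
    v = .inl x ∨ v = .inl (x + 1) ∨ v = .inl (x - 1) ∨ v = .inr x := by
  simp [closedNbhd_GP, nbrs]

lemma mem_closedNbhd_inr {x : ZMod n} {v : GPVertex n} : v ∈ closedNbhd (GP n k) (.inr x) ↔
    v = .inr x ∨ v = .inr (x + k) ∨ v = .inr (x - k) ∨ v = .inl x := by
  simp [closedNbhd_GP, nbrs]

/-- Translation of a vertex along its level. -/
def shift (z : ZMod n) : GPVertex n → GPVertex n := Sum.map (z + ·) (z + ·)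

lemma shift_zero (v : GPVertex n) : shift 0 v = v := by
  rcases v with x | x <;> simp [shift]

lemma shift_mem_closedNbhd {r r' : GPVertex n} (z : ZMod n) (h : r' ∈ closedNbhd (GP n k) r) :
    shift z r' ∈ closedNbhd (GP n k) (shift z r) := by
  rw [closedNbhd_GP] at h ⊢
  have hmap := coe_nbrs_map (AddMonoidHom.id (ZMod n)) z 1 (k : ZMod n) r
  exact hmap ▸ Set.mem_image_of_mem _ h

/-- The move from `r` to `r'` changes the position modulo `H` at most by a step along the outer
cycle. For `H = ⊥` this excludes inner steps, for `H` generated by `k` it is no restriction. -/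
def Drift (H : AddSubgroup (ZMod n)) (r r' : GPVertex n) : Prop :=
  pos r' - pos r ∈ H ∨ ∃ x, r = .inl x ∧ (r' = .inl (x + 1) ∨ r' = .inl (x - 1))

lemma drift_bot_or {r r' : GPVertex n} (h : r' ∈ closedNbhd (GP n k) r) :
    Drift ⊥ r r' ∨ ∃ x, r = .inr x ∧ (r' = .inr (x + k) ∨ r' = .inr (x - k)) := by
  rcases r with x | x
  · rcases mem_closedNbhd_inl.mp h with rfl | rfl | rfl | rfl <;> simp [Drift, pos]
  · rcases mem_closedNbhd_inr.mp h with rfl | rfl | rfl | rfl <;> simp [Drift, pos]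

lemma drift_zmultiples {r r' : GPVertex n} (h : r' ∈ closedNbhd (GP n k) r) :
    Drift (.zmultiples (k : ZMod n)) r r' := by
  rcases drift_bot_or h with hdrift | ⟨x, rfl, rfl | rfl⟩
  · exact hdrift.imp_left fun hmem ↦ (bot_le : ⊥ ≤ AddSubgroup.zmultiples (k : ZMod n)) hmem
  · exact .inl (by simp [pos])
  · exact .inl (by simp [pos])

/-- The cop `c` can move onto the level of the robber `r`, at a position congruent to that of `r`
modulo `H`. -/
def CanSync (k : ℕ) (H : AddSubgroup (ZMod n)) (c r : GPVertex n) : Prop :=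
  ∃ z ∈ H, shift z r ∈ closedNbhd (GP n k) c

lemma canSync_inl {H : AddSubgroup (ZMod n)} {y : ZMod n} {r : GPVertex n}
    (h : y - pos r ∈ H) : CanSync k H (.inl y) r := by
  refine ⟨_, h, ?_⟩
  rcases r with x | x <;> simp [shift, pos, mem_closedNbhd_inl]

lemma canSync_inl_inl {H : AddSubgroup (ZMod n)} {y x : ZMod n}
    (h : y - (x + 1) ∈ H ∨ y - (x - 1) ∈ H) : CanSync k H (.inl y) (.inl x) := by
  rcases h with h | h
  · exact ⟨_, h, mem_closedNbhd_inl.mpr (.inr (.inr (.inl (congrArg Sum.inl (by ring)))))⟩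
  · exact ⟨_, h, mem_closedNbhd_inl.mpr (.inr (.inl (congrArg Sum.inl (by ring))))⟩

/-- Modulo `H`, the position `x` lies `g` below `y` and `h` above `z`. -/
def Gap (H : AddSubgroup (ZMod n)) (y z x : ZMod n) (g h : ℕ) : Prop :=
  y - (x + g) ∈ H ∧ z - (x - h) ∈ H

lemma exists_gap [NeZero n] (H : AddSubgroup (ZMod n)) (y z x : ZMod n) :
    ∃ g h, Gap H y z x g h :=
  ⟨(y - x).val, (x - z).val, by simp [Gap]⟩

lemma Gap.exists_lt {H : AddSubgroup (ZMod n)} {y z : ZMod n} {r r' : GPVertex n} {g h : ℕ}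
    (hgap : Gap H y z (pos r) g h) (hy : ¬ CanSync k H (.inl y) r) (hz : ¬ CanSync k H (.inl z) r)
    (hr : Drift H r r') :
    ∃ g' h', g' + h' < g + h ∧ Gap H (y - 1) (z + 1) (pos r') g' h' := by
  obtain ⟨hg, hh⟩ := hgap
  rcases g with _ | g
  · exact absurd (canSync_inl (by simpa using hg)) hy
  rcases h with _ | h
  · exact absurd (canSync_inl (by simpa using hh)) hz
  rcases hr with hr | ⟨x, rfl, rfl | rfl⟩
  · refine ⟨g, h, by lia, ?_, ?_⟩
    · convert H.sub_mem hg hr using 1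
      push_cast; ring
    · convert H.sub_mem hh hr using 1
      push_cast; ring
  · rcases g with _ | g
    · exact absurd (canSync_inl_inl (.inl (by simpa [pos] using hg))) hy
    · refine ⟨g, h + 1, by lia, ?_, ?_⟩
      · convert hg using 1
        simp only [pos, Sum.elim_inl, id]; push_cast; ring
      · convert hh using 1
        simp only [pos, Sum.elim_inl, id]; push_cast; ring
  · rcases h with _ | h
    · exact absurd (canSync_inl_inl (.inr (by simpa [pos] using hh))) hz
    · refine ⟨g + 1, h, by lia, ?_, ?_⟩
      · convert hg using 1
        simp only [pos, Sum.elim_inl, id]; push_cast; ring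
      · convert hh using 1
        simp only [pos, Sum.elim_inl, id]; push_cast; ring

/-- Two free cops on the outer cycle close in on the robber from both sides, while the cops at `a`
and `d` maintain the property `P`. -/
theorem copsForce_of_chase [NeZero n] {H : AddSubgroup (ZMod n)}
    {P : GPVertex n → GPVertex n → GPVertex n → Prop}
    (maintain : ∀ a d r, P a d r → ∃ a' ∈ closedNbhd (GP n k) a, ∃ d' ∈ closedNbhd (GP n k) d,
      ∀ r' ∈ closedNbhd (GP n k) r, (P a' d' r' ∧ Drift H r r') ∨
        ∀ y z, CopsForce (GP n k) ![a', .inl y, .inl z, d'] r')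
    (win : ∀ a d r y z, P a d r → CanSync k H (.inl y) r →
      CopsForce (GP n k) ![a, .inl y, .inl z, d] r)
    {a d r : GPVertex n} (hP : P a d r) (y z : ZMod n) :
    CopsForce (GP n k) ![a, .inl y, .inl z, d] r := by
  obtain ⟨g, h, hgap⟩ := exists_gap H y z (pos r)
  induction hN : g + h using Nat.strong_induction_on generalizing a d r y z g h with
  | _ N ih =>
    by_cases hy : CanSync k H (.inl y) r
    · exact win a d r y z hP hy
    by_cases hz : CanSync k H (.inl z) r
    · exact (win a d r z y hP hz).swap_one_two
    obtain ⟨a', ha', d', hd', hr⟩ := maintain a d r hP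
    refine .step_four ha' (b' := .inl (y - 1)) (by simp [mem_closedNbhd_inl])
      (c' := .inl (z + 1)) (by simp [mem_closedNbhd_inl]) hd' fun r' hr' ↦ ?_
    obtain ⟨hP', hdrift⟩ | hforce := hr r' hr'
    · obtain ⟨g', h', hlt, hgap'⟩ := hgap.exists_lt hy hz hdrift
      exact ih _ (hN ▸ hlt) hP' _ _ g' h' hgap' rfl
    · exact hforce _ _

/-- The cops `a` and `d` can move onto the level of the robber `r`, to the positions `g` inner
steps ahead of it and `h` inner steps behind it. -/
def SyncPair (k : ℕ) (a d r : GPVertex n) (g h : ℕ) : Prop :=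
  shift (g • (k : ZMod n)) r ∈ closedNbhd (GP n k) a ∧
    shift (-(h • (k : ZMod n))) r ∈ closedNbhd (GP n k) d

lemma exists_nsmul_eq_of_mem_zmultiples [NeZero n] {x u : ZMod n}
    (hu : u ∈ AddSubgroup.zmultiples x) : ∃ g : ℕ, g • x = u :=
  (isOfFinAddOrder_of_finite x).mem_multiples_iff_mem_zmultiples.mpr hu

lemma exists_syncPair [NeZero n] {a d r : GPVertex n}
    (ha : CanSync k (.zmultiples (k : ZMod n)) a r)
    (hd : CanSync k (.zmultiples (k : ZMod n)) d r) : ∃ g h, SyncPair k a d r g h := by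
  obtain ⟨u, hu, ha⟩ := ha
  obtain ⟨v, hv, hd⟩ := hd
  obtain ⟨g, rfl⟩ := exists_nsmul_eq_of_mem_zmultiples hu
  obtain ⟨h, hh⟩ := exists_nsmul_eq_of_mem_zmultiples (neg_mem hv)
  exact ⟨g, h, ha, by rwa [hh, neg_neg]⟩

/-- An inner step of the robber brings it closer to `a` or to `d`. -/
lemma syncPair_inner_step {x : ZMod n} {r' : GPVertex n} {g h : ℕ}
    (hr' : r' = .inr (x + k) ∨ r' = .inr (x - k)) :
    ∃ g' h', g' + h' < g + 1 + (h + 1) ∧ SyncPair k (shift ((g + 1) • (k : ZMod n)) (.inr x))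
      (shift (-((h + 1) • (k : ZMod n))) (.inr x)) r' g' h' := by
  rcases hr' with rfl | rfl
  · have hahead : shift (g • (k : ZMod n)) (.inr (x + k)) =
        shift ((g + 1) • (k : ZMod n)) (.inr x) :=
      congrArg Sum.inr (by rw [succ_nsmul]; ring)
    exact ⟨g, h + 1, by lia, .inl hahead, shift_mem_closedNbhd _ (by simp [mem_closedNbhd_inr])⟩
  · have hbehind : shift (-(h • (k : ZMod n))) (.inr (x - k)) =
        shift (-((h + 1) • (k : ZMod n))) (.inr x) :=
      congrArg Sum.inr (by rw [succ_nsmul]; ring)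
    exact ⟨g + 1, h, by lia, shift_mem_closedNbhd _ (by simp [mem_closedNbhd_inr]), .inl hbehind⟩

theorem copsForce_of_syncPair [NeZero n] {a d r : GPVertex n} {g h : ℕ}
    (hpair : SyncPair k a d r g h) (y z : ZMod n) :
    CopsForce (GP n k) ![a, .inl y, .inl z, d] r := by
  induction hN : g + h using Nat.strong_induction_on generalizing a d r y z g h with
  | _ N ih =>
    rcases g with _ | g
    · exact .of_mem 0 (by simpa [shift_zero] using hpair.1)
    rcases h with _ | h
    · exact .of_mem 3 (by simpa [shift_zero] using hpair.2)
    refine copsForce_of_chase (H := ⊥) (P := fun a d r ↦ SyncPair k a d r (g + 1) (h + 1))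
      (fun a d r hpair ↦ ⟨_, hpair.1, _, hpair.2, fun r' hr' ↦ ?_⟩)
      (fun a d r y z _ ⟨u, hu, hr⟩ ↦ .of_mem 1 ?_) hpair y z
    · obtain hdrift | ⟨x, rfl, hinner⟩ := drift_bot_or hr'
      · exact .inl ⟨⟨shift_mem_closedNbhd _ hr', shift_mem_closedNbhd _ hr'⟩, hdrift⟩
      · obtain ⟨g', h', hlt, hpair'⟩ := syncPair_inner_step hinner
        exact .inr fun y z ↦ ih _ (hN ▸ hlt) hpair' y z rfl
    · rwa [AddSubgroup.mem_bot.mp hu, shift_zero] at hr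

theorem copsForce_of_canSync [NeZero n] {a r : GPVertex n}
    (ha : CanSync k (.zmultiples (k : ZMod n)) a r) (w y z : ZMod n) :
    CopsForce (GP n k) ![a, .inl y, .inl z, .inl w] r := by
  refine copsForce_of_chase (H := .zmultiples (k : ZMod n))
    (P := fun a d r ↦ CanSync k (.zmultiples (k : ZMod n)) a r ∧ ∃ w, d = .inl w)
    (fun a d r ⟨⟨u, hu, ha⟩, hd⟩ ↦ ⟨_, ha, d, .inl rfl, fun r' hr' ↦
      .inl ⟨⟨⟨u, hu, shift_mem_closedNbhd u hr'⟩, hd⟩, drift_zmultiples hr'⟩⟩)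
    ?_ ⟨ha, w, rfl⟩ y z
  rintro a _ r y z ⟨ha, w, rfl⟩ hy
  obtain ⟨g, h, hpair⟩ := exists_syncPair ha hy
  exact (copsForce_of_syncPair hpair w z).swap_one_three

theorem copsForce_of_inl [NeZero n] (x w y z : ZMod n) (r : GPVertex n) :
    CopsForce (GP n k) ![.inl x, .inl y, .inl z, .inl w] r := by
  refine copsForce_of_chase (H := .zmultiples (k : ZMod n))
    (P := fun a d _ ↦ (∃ x, a = .inl x) ∧ ∃ w, d = .inl w)
    (fun a d r hP ↦ ⟨a, .inl rfl, d, .inl rfl, fun r' hr' ↦ .inl ⟨hP, drift_zmultiples hr'⟩⟩)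
    ?_ ⟨⟨x, rfl⟩, w, rfl⟩ y z
  rintro _ _ r y z ⟨⟨x, rfl⟩, w, rfl⟩ hy
  exact (copsForce_of_canSync hy w x z).swap_zero_one

theorem copsWinWith_four_GP [NeZero n] : CopsWinWith (GP n k) 4 :=
  copsWinWith_of_copsForce ![.inl 0, .inl 0, .inl 0, .inl 0] (copsForce_of_inl 0 0 0 0)

end FourCops

end CopsAndRobbers

/-- If `i·n = 7k` for some `i ∈ {1,2,3}`, `2k < n`, and either `n ≥ 42` or
`(n,k) ∈ {(28,8),(35,10),(35,15)}`, then the cop number of `GP(n,k)` is `4`. -/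
theorem copNumber_GP_eq_four (n k : ℕ)
    (hn : 0 < n) (hk : 0 < k)
    (hi : ∃ i, i ∈ ({1, 2, 3} : Set ℕ) ∧ i * n = 7 * k)
    (h2k : 2 * k < n)
    (hbig : 42 ≤ n ∨ (n = 28 ∧ k = 8) ∨ (n = 35 ∧ k = 10) ∨ (n = 35 ∧ k = 15)) :
    copNumber (GP n k) = 4 := by
  have : NeZero n := ⟨hn.ne'⟩
  refine le_antisymm (Nat.sInf_le CopsAndRobbers.copsWinWith_four_GP)
    (le_csInf ⟨4, CopsAndRobbers.copsWinWith_four_GP⟩ fun m hwin ↦ ?_)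
  by_contra! hm
  obtain ⟨i, hi, hik⟩ := hi
  simp only [Set.mem_insert_iff, Set.mem_singleton_iff] at hi
  obtain ⟨q, rfl⟩ : 7 ∣ n := by lia
  obtain rfl : k = i * q := by lia
  have hk7 : 7 * ((i * q : ℕ) : ZMod (7 * q)) = 0 := by
    exact_mod_cast (ZMod.natCast_eq_zero_iff _ _).mpr ⟨i, by ring⟩
  have hcover : CopsAndRobbers.LocallyCovered (GP (7 * q) (i * q)) :=
    CopsAndRobbers.locallyCovered_GP hk7
      (CopsAndRobbers.eq_zero_of_coverHom_eq_zero hi (by lia) hk7)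
  have hcard : 30 < Nat.card (GPVertex (7 * q)) := by
    rw [Nat.card_sum, Nat.card_zmod]
    lia
  exact hcover.not_copsWinWith hcard (by lia) hwin
end

section
/- Let n and k be positive integers with i·n = 7k for some i ∈ {1,2,3} and 2k < n, and suppose that either n ≥ 42 or (n,k) ∈ {(28,8),(35,10),(35,15)}. Let G = GP(n,k), let c_1, c_2, c_3 be vertices of G (the positions of three cops) and let r be a vertex of G not equal to any c_j (the robber's position). Suppose that for every neighbour v of r, at least one of the following holds: (a) some cop c_j satisfies dist(r, c_j) ≤ 2 and c_j lies in a branch of v; or (b) for every neighbour u of v with u ≠ r, some cop c_j lies in the branch of v through u. Then the configuration (c_1,c_2,c_3; r) is trapped. -/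
open SimpleGraph

/-- `c` lies in a branch of `v` (relative to the robber position `r`). -/
def inBranchOf {V : Type*} (G : SimpleGraph V) (r v c : V) : Prop :=
  ∃ u, G.Adj v u ∧ u ≠ r ∧ c ∈ branch G r v u

/-!
Every `GP(n,k)` is a quotient of an infinite lattice: outer and inner copies of `ℤ × ℤ`, joined by
spokes, with the point `(x, y)` lying over the index `x + y k`. When `i n = 7 k`, the congruence
`x + y k ≡ 0 (mod n)` has no solution short enough to close up a walk of even length at most `8`,
so two paths of equal length at most `4` with common endpoints lift to lattice paths with common
endpoints. In the lattice two such reduced paths can differ only by going opposite ways around an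
8-cycle, as the words `a s b s` and `s b s a` with `s` a spoke. Hence a vertex not adjacent to the
robber lies in branches of two neighbours only if it is at distance `4` and one of them is the
spoke neighbour, and the branch going straight on from any other neighbour belongs to it alone.

Suppose no cop is adjacent to the robber. Every neighbour except the spoke one has a cop of its own:
a cop at distance at most `2`, or one on the straight branch. A neighbour without a cop at distance
at most `2` has distinct cops on its two branches; if the two other neighbours had cops of their
own, this would make four cops. Applied to the spoke neighbour, this gives it a cop of its own as
well; applied again, to any neighbour, it puts a cop next to each of them.
-/

section Branches

variable {V : Type*} {G : SimpleGraph V} {r : V}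

/-- The branches at `r` overlap so little that cops lying in them can be counted. In `GP(n,k)` the
exceptional neighbour of the last field is the one joined to `r` by a spoke. -/
structure SeparatedBranches (G : SimpleGraph V) (r : V) : Prop where
  exists_two_branches : ∀ v, G.Adj r v →
    ∃ u u', u ≠ u' ∧ (G.Adj v u ∧ u ≠ r) ∧ (G.Adj v u' ∧ u' ≠ r)
  eq_of_mem_branch : ∀ v, G.Adj r v → ∀ c, ¬ G.Adj r c → ∀ u u',
    c ∈ branch G r v u → c ∈ branch G r v u' → u = u'
  eq_of_dist_le_two : ∀ v v', G.Adj r v → G.Adj r v' → ∀ c, ¬ G.Adj r c → G.dist r c ≤ 2 →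
    inBranchOf G r v c → inBranchOf G r v' c → v = v'
  exists_exclusive_branch : ∃ s, ∀ v, G.Adj r v → v ≠ s →
    ∃ u, (G.Adj v u ∧ u ≠ r) ∧ ∀ c ∈ branch G r v u, ¬ G.Adj r c →
      ∀ v', G.Adj r v' → inBranchOf G r v' c → v' = v

theorem adj_of_dist_le_two_of_inBranchOf {v c : V} (hv : G.Adj r v) (hc : ¬ G.Adj r c)
    (hdist : G.dist r c ≤ 2) (hbranch : inBranchOf G r v c) : G.Adj v c := by
  obtain ⟨u, huv, -, rfl | ⟨-, p, hp, hprefix⟩⟩ := hbranch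
  · exact absurd hv hc
  have hsupport : [r, v, u] = p.support := hprefix.eq_of_length_le (by simp; omega)
  have hlast : p.support.getLast p.support_ne_nil = c := p.getLast_support
  simp only [← hsupport, List.getLast_cons_cons, List.getLast_singleton] at hlast
  exact hlast ▸ huv

theorem card_lt_card_of_exclusive {ι J : Type*} [Finite ι] {T : ι → J → Prop} {j₀ : J} {i₁ i₂ : ι}
    (hne : i₁ ≠ i₂) (h₁ : T i₁ j₀) (h₂ : T i₂ j₀)
    (hexcl : ∀ j ≠ j₀, ∃ i, T i j ∧ ∀ j', T i j' → j' = j) : Nat.card J < Nat.card ι := by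
  classical
  have : Nonempty ι := ⟨i₁⟩
  -- Sending `j₀` to `i₁` and every other `j` to its exclusive index is injective and misses `i₂`.
  choose! f hf hfexcl using hexcl
  have hf₀ {j i} (hj : j ≠ j₀) (hi : T i j₀) : f j ≠ i := by
    rintro rfl
    exact hj (hfexcl j hj j₀ hi).symm
  have hinj : Function.Injective (Function.update f j₀ i₁) := by
    intro j j' hjj'
    by_cases hj : j = j₀ <;> by_cases hj' : j' = j₀
    · rw [hj, hj']
    · subst hj
      simp only [Function.update_self, Function.update_of_ne hj'] at hjj'
      exact absurd hjj'.symm (hf₀ hj' h₁)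
    · subst hj'
      simp only [Function.update_self, Function.update_of_ne hj] at hjj'
      exact absurd hjj' (hf₀ hj h₁)
    · simp only [Function.update_of_ne hj, Function.update_of_ne hj'] at hjj'
      exact hfexcl j' hj' j (hjj' ▸ hf j hj)
  have hrange : Set.range (Function.update f j₀ i₁) ≠ Set.univ := by
    refine (Set.ne_univ_iff_exists_notMem _).mpr ⟨i₂, ?_⟩
    rintro ⟨j, hj⟩
    by_cases hj₀ : j = j₀
    · subst hj₀
      exact hne (by simpa using hj)
    · exact hf₀ hj₀ h₂ (by simpa [hj₀] using hj)
  rw [← Set.ncard_range_of_injective hinj]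
  exact Set.ncard_lt_card hrange

theorem SeparatedBranches.exists_close {ι : Type*} [Finite ι] (h : SeparatedBranches G r)
    (hcard : Nat.card ι ≤ Nat.card (G.neighborSet r)) {c : ι → V} (hc : ∀ i, ¬ G.Adj r (c i))
    (hcov : ∀ v, G.Adj r v → (∃ i, G.dist r (c i) ≤ 2 ∧ inBranchOf G r v (c i)) ∨
      ∀ u, G.Adj v u → u ≠ r → ∃ i, c i ∈ branch G r v u) {v : V} (hv : G.Adj r v) :
    ∃ i, G.dist r (c i) ≤ 2 ∧ inBranchOf G r v (c i) := by
  let Close (v : V) : Prop := ∃ i, G.dist r (c i) ≤ 2 ∧ inBranchOf G r v (c i)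
  let HasExclusive (v : V) : Prop :=
    ∃ i, inBranchOf G r v (c i) ∧ ∀ v', G.Adj r v' → inBranchOf G r v' (c i) → v' = v
  have hasExclusive_of_close {v} (hv : G.Adj r v) : Close v → HasExclusive v :=
    fun ⟨i, hd, hi⟩ => ⟨i, hi, fun v' hv' hi' =>
      h.eq_of_dist_le_two v' v hv' hv _ (hc i) hd hi' hi⟩
  have close_of_others {v} (hv : G.Adj r v)
      (hothers : ∀ v', G.Adj r v' → v' ≠ v → HasExclusive v') : Close v := by
    refine (hcov v hv).resolve_right fun hfar => ?_
    obtain ⟨u, u', hne, ⟨hu, hur⟩, hu', hur'⟩ := h.exists_two_branches v hv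
    obtain ⟨i, hi⟩ := hfar u hu hur
    obtain ⟨i', hi'⟩ := hfar u' hu' hur'
    have hii' : i ≠ i' := by
      rintro rfl
      exact hne (h.eq_of_mem_branch v hv _ (hc i) u u' hi hi')
    refine hcard.not_gt (card_lt_card_of_exclusive
      (T := fun i (v : G.neighborSet r) => inBranchOf G r v (c i)) (j₀ := ⟨v, hv⟩) hii'
      ⟨u, hu, hur, hi⟩ ⟨u', hu', hur', hi'⟩ fun ⟨w, hw⟩ hwv => ?_)
    obtain ⟨j, hj, hjexcl⟩ := hothers w hw fun e => hwv (Subtype.ext e)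
    exact ⟨j, hj, fun ⟨w', hw'⟩ hjw' => Subtype.ext (hjexcl w' hw' hjw')⟩
  obtain ⟨s, hs⟩ := h.exists_exclusive_branch
  have hasExclusive_of_ne {v} (hv : G.Adj r v) (hvs : v ≠ s) : HasExclusive v := by
    refine (hcov v hv).elim (hasExclusive_of_close hv) fun hfar => ?_
    obtain ⟨u, ⟨hu, hur⟩, hexcl⟩ := hs v hv hvs
    obtain ⟨i, hi⟩ := hfar u hu hur
    exact ⟨i, ⟨u, hu, hur, hi⟩, hexcl _ hi (hc i)⟩
  refine close_of_others hv fun v' hv' _ => ?_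
  by_cases hv's : v' = s
  · subst hv's
    exact hasExclusive_of_close hv' (close_of_others hv' fun _ => hasExclusive_of_ne)
  · exact hasExclusive_of_ne hv' hv's

theorem SeparatedBranches.trapped (h : SeparatedBranches G r)
    (hdeg : 3 ≤ Nat.card (G.neighborSet r)) {c₁ c₂ c₃ : V}
    (hcov : ∀ v, G.Adj r v →
      ((G.dist r c₁ ≤ 2 ∧ inBranchOf G r v c₁) ∨ (G.dist r c₂ ≤ 2 ∧ inBranchOf G r v c₂) ∨
        (G.dist r c₃ ≤ 2 ∧ inBranchOf G r v c₃)) ∨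
      ∀ u, G.Adj v u → u ≠ r →
        (c₁ ∈ branch G r v u ∨ c₂ ∈ branch G r v u ∨ c₃ ∈ branch G r v u)) :
    Trapped G c₁ c₂ c₃ r := by
  have exists_cop (Q : V → Prop) : (Q c₁ ∨ Q c₂ ∨ Q c₃) ↔ ∃ i, Q (![c₁, c₂, c₃] i) := by
    simp [Fin.exists_fin_succ]
  refine or_iff_not_imp_left.mpr fun hnadj v hv => ?_
  rw [exists_cop (G.Adj · r)] at hnadj
  push Not at hnadj
  replace hnadj i : ¬ G.Adj r (![c₁, c₂, c₃] i) := fun h => hnadj i h.symm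
  obtain ⟨i, hdist, hbranch⟩ := h.exists_close (by simpa using hdeg) hnadj (fun v hv =>
    (hcov v hv).imp (exists_cop fun c => G.dist r c ≤ 2 ∧ inBranchOf G r v c).mp
      fun h u hu hur => (exists_cop (· ∈ branch G r v u)).mp (h u hu hur)) hv
  exact (exists_cop (· ∈ closedNbhd G v)).mpr
    ⟨i, Or.inr (adj_of_dist_le_two_of_inBranchOf hv (hnadj i) hdist hbranch)⟩

end Branches

/-- A direction in which to leave a vertex of `GP(n,k)`: along its cycle or along its spoke. -/
inductive Move
  | forward
  | backward
  | spoke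
  deriving DecidableEq

namespace Move

instance : Fintype Move where
  elems := {forward, backward, spoke}
  complete m := by cases m <;> simp

/-- The move undoing a given one. -/
def inv : Move → Move
  | forward => backward
  | backward => forward
  | spoke => spoke

theorem exists_pair_ne_inv : ∀ m : Move, ∃ m₁ m₂, m₁ ≠ m₂ ∧ m₁ ≠ m.inv ∧ m₂ ≠ m.inv := by
  decide

theorem ne_inv_of_ne_spoke : ∀ m : Move, m ≠ .spoke → m ≠ m.inv := by
  decide

end Move

/-- A word of moves in which no move is immediately undone. -/
def IsReducedWord (W : List Move) : Prop := W.IsChain fun a b => b ≠ a.inv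

instance : DecidablePred IsReducedWord := fun W => inferInstanceAs (Decidable (W.IsChain _))

/-- A vertex of the infinite lattice of which each `GP(n,k)` is a quotient: outer and inner copies
of `ℤ × ℤ` joined by spokes, where moves along the outer cycles change `x` and moves along the
inner cycles change `y`. -/
@[ext] structure LatticePoint where
  isOuter : Bool
  x : ℤ
  y : ℤ
  deriving DecidableEq

namespace LatticePoint

/-- The outer or inner vertex over `0`. -/
def origin (isOuter : Bool) : LatticePoint := ⟨isOuter, 0, 0⟩

/-- The neighbour of a lattice point in a given direction. -/
def step : LatticePoint → Move → LatticePoint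
  | ⟨true, x, y⟩, .forward => ⟨true, x + 1, y⟩
  | ⟨true, x, y⟩, .backward => ⟨true, x - 1, y⟩
  | ⟨false, x, y⟩, .forward => ⟨false, x, y + 1⟩
  | ⟨false, x, y⟩, .backward => ⟨false, x, y - 1⟩
  | ⟨b, x, y⟩, .spoke => ⟨!b, x, y⟩

/-- The lattice point reached by a word of moves. -/
def follow (P : LatticePoint) (W : List Move) : LatticePoint := W.foldl step P

variable (P : LatticePoint) (m : Move) (W W' : List Move)

@[simp] theorem follow_nil : P.follow [] = P := rfl

@[simp] theorem follow_cons : P.follow (m :: W) = (P.step m).follow W := rfl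

theorem follow_append : P.follow (W ++ W') = (P.follow W).follow W' := List.foldl_append

@[simp] theorem step_step_inv : (P.step m).step m.inv = P := by
  obtain ⟨_ | _, x, y⟩ := P <;> cases m <;> simp [step, Move.inv]

theorem eq_inv_of_step_step_eq {m' : Move} (h : (P.step m).step m' = P) : m' = m.inv := by
  obtain ⟨_ | _, x, y⟩ := P <;> cases m <;> cases m' <;> grind [step, Move.inv]

theorem follow_follow_reverse_inv : (P.follow W).follow (W.map Move.inv).reverse = P := by
  induction W generalizing P with
  | nil => rfl
  | cons m W ih => simp [follow_append, ih]

theorem abs_sub_add_count_spoke_le :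
    |(P.follow W).x - P.x| + |(P.follow W).y - P.y| + W.count .spoke ≤ W.length := by
  induction W generalizing P with
  | nil => simp
  | cons m W ih =>
    have := ih (P.step m)
    obtain ⟨_ | _, x, y⟩ := P <;> cases m <;> grind [step, follow_cons]

theorem even_displacement_add_count_spoke : Even ((P.follow W).x - P.x +
    ((P.follow W).y - P.y) + W.count .spoke + W.length) := by
  induction W generalizing P with
  | nil => simp
  | cons m W ih =>
    have := ih (P.step m)
    obtain ⟨_ | _, x, y⟩ := P <;> cases m <;> grind [step, follow_cons]

theorem isOuter_follow_eq_iff :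
    (P.follow W).isOuter = P.isOuter ↔ Even (W.count .spoke) := by
  induction W generalizing P with
  | nil => simp
  | cons m W ih =>
    have := ih (P.step m)
    obtain ⟨_ | _, x, y⟩ := P <;> cases m <;> simp_all [step, Nat.even_add_one, ← this]

theorem follow_x_eq_or_y_eq (h : Move.spoke ∉ W) :
    (P.follow W).x = P.x ∨ (P.follow W).y = P.y := by
  suffices (P.follow W).isOuter = P.isOuter ∧
      if P.isOuter then (P.follow W).y = P.y else (P.follow W).x = P.x by grind
  induction W generalizing P with
  | nil => simp
  | cons m W ih =>
    have := ih (P.step m) (by simp_all)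
    obtain ⟨_ | _, x, y⟩ := P <;> cases m <;> simp_all [step]

end LatticePoint

open LatticePoint

/-- All words with a given number of moves. -/
def wordsOfLength : ℕ → List (List Move)
  | 0 => [[]]
  | d + 1 => (wordsOfLength d).flatMap fun W => [.forward :: W, .backward :: W, .spoke :: W]

theorem mem_wordsOfLength_length (W : List Move) : W ∈ wordsOfLength W.length := by
  induction W with
  | nil => simp [wordsOfLength]
  | cons m W ih => cases m <;> simpa [wordsOfLength] using ih

/-- The pair of words `a s b s` and `s b s a` (with `s` the spoke), which lead from one vertex of
an 8-cycle to the opposite one. -/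
def AroundOctagon (W W' : List Move) : Prop :=
  ∃ a b : Move, a ≠ .spoke ∧ W = [a, .spoke, b, .spoke] ∧ W' = [.spoke, b, .spoke, a]

instance (W W' : List Move) : Decidable (AroundOctagon W W') :=
  inferInstanceAs (Decidable (∃ _, _))

theorem eq_or_aroundOctagon_of_mem_wordsOfLength : ∀ t : Bool, ∀ d < 5,
    ∀ W ∈ wordsOfLength d, IsReducedWord W → ∀ W' ∈ wordsOfLength d, IsReducedWord W' →
    (origin t).follow W = (origin t).follow W' →
    W = W' ∨ AroundOctagon W W' ∨ AroundOctagon W' W := by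
  decide +kernel

theorem eq_or_aroundOctagon_of_follow_eq {t : Bool} {W W' : List Move} (hW : IsReducedWord W)
    (hW' : IsReducedWord W') (hlen : W.length = W'.length) (hle : W.length ≤ 4)
    (h : (origin t).follow W = (origin t).follow W') :
    W = W' ∨ AroundOctagon W W' ∨ AroundOctagon W' W :=
  eq_or_aroundOctagon_of_mem_wordsOfLength t _ (by omega) W (mem_wordsOfLength_length W) hW W'
    (hlen ▸ mem_wordsOfLength_length W') hW' h

/-- The congruence `x + y k ≡ 0 (mod n)` has no nonzero solution that could be the displacement
along a closed walk of even length at most 8 in `GP(n,k)`. -/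
def NoShortRelation (n k : ℕ) : Prop :=
  ∀ x y : ℤ, Even (x + y) → (|x| + |y| ≤ 6 ∨ |x| + |y| ≤ 8 ∧ (x = 0 ∨ y = 0)) →
    (x + y * k : ZMod n) = 0 → x = 0 ∧ y = 0

theorem noShortRelation_of_mul_eq_seven_mul {n k : ℕ}
    (hi : ∃ i, i ∈ ({1, 2, 3} : Set ℕ) ∧ i * n = 7 * k)
    (hbig : 42 ≤ n ∨ (n = 28 ∧ k = 8) ∨ (n = 35 ∧ k = 10) ∨ (n = 35 ∧ k = 15)) :
    NoShortRelation n k := by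
  intro x y heven hshort hrel
  obtain ⟨i, hi, hik⟩ := hi
  have hi : i = 1 ∨ i = 2 ∨ i = 3 := by simpa using hi
  obtain ⟨m, rfl⟩ : 7 ∣ n := by rcases hi with rfl | rfl | rfl <;> omega
  obtain rfl : k = i * m := by linarith
  obtain ⟨t, ht⟩ : ((7 * m : ℕ) : ℤ) ∣ x + y * (i * m : ℕ) := by
    rw [← ZMod.intCast_zmod_eq_zero_iff_dvd]; exact_mod_cast hrel
  have hx : x = m * (7 * t - y * i) := by push_cast at ht; linarith
  generalize hz : 7 * t - y * i = z at hx
  have habs : |x| = m * |z| := by rw [hx, abs_mul, Nat.abs_cast]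
  have hm : 4 ≤ m := by omega
  have hz0 : z = 0 := by
    by_contra hz0
    have hz1 : 1 ≤ |z| := Int.one_le_abs hz0
    have hmz : (m : ℤ) ≤ m * |z| := le_mul_of_one_le_right (by omega) hz1
    have hy0 : y ≠ 0 := by
      intro hy0
      have hz7 : 7 ≤ |z| := Int.le_of_dvd (by omega) ((dvd_abs 7 z).mpr ⟨t, by simp [← hz, hy0]⟩)
      have : 4 * 7 ≤ m * |z| := by gcongr; exact_mod_cast hm
      have := abs_nonneg y
      omega
    have hzone : |z| = 1 := by
      by_contra hz2
      have : 4 * 2 ≤ m * |z| := by gcongr <;> omega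
      grind
    -- Now `m + |y| ≤ 6` and `i y ≡ ±1 (mod 7)`: either `i = 2`, `m ≥ 4` and `|y| ≥ 3`, or `i = 3`,
    -- `m ≥ 5` and `|y| ≥ 2`, or `m ≥ 6`.
    grind
  subst hz0
  have hy : 7 ∣ y := by rcases hi with rfl | rfl | rfl <;> omega
  obtain rfl : x = 0 := by simpa using hx
  rw [Int.even_iff] at heven
  simp only [abs_eq_max_neg] at hshort
  omega

namespace LatticePoint

/-- The quotient map from the lattice onto `GP(n,k)` that sends `origin true` to `a_s` and
`origin false` to `b_s`. -/
def proj (n k : ℕ) (s : ZMod n) (P : LatticePoint) : GPVertex n :=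
  bif P.isOuter then .inl (s + P.x + P.y * k) else .inr (s + P.x + P.y * k)

variable {n k : ℕ} {s : ZMod n} {P Q : LatticePoint}

theorem exists_eq_proj_origin (k : ℕ) (r : GPVertex n) : ∃ s t, r = proj n k s (origin t) := by
  rcases r with s | s
  · exact ⟨s, true, by simp [proj, origin]⟩
  · exact ⟨s, false, by simp [proj, origin]⟩

theorem proj_eq_proj_iff : proj n k s P = proj n k s Q ↔
    P.isOuter = Q.isOuter ∧ ((P.x - Q.x : ℤ) + (P.y - Q.y : ℤ) * k : ZMod n) = 0 := by
  obtain ⟨_ | _, x, y⟩ := P <;> obtain ⟨_ | _, x', y'⟩ := Q <;> grind [proj]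

theorem follow_eq_of_proj_eq (hfree : NoShortRelation n k) {W : List Move}
    (heven : Even W.length) (hle : W.length ≤ 8)
    (h : proj n k s (P.follow W) = proj n k s P) : P.follow W = P := by
  obtain ⟨hside, hrel⟩ := proj_eq_proj_iff.mp h
  have hcount : Even (W.count .spoke) := (isOuter_follow_eq_iff P W).mp hside
  have hdisp := even_displacement_add_count_spoke P W
  have hbound := abs_sub_add_count_spoke_le P W
  obtain ⟨hx, hy⟩ := hfree _ _ (by grind) (by
    -- A closed walk uses no spoke and stays on one axis, or uses two and has six moves left.
    by_cases hspoke : Move.spoke ∈ W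
    · have := List.count_pos_iff.mpr hspoke
      grind
    · have := follow_x_eq_or_y_eq P W hspoke
      grind) hrel
  exact LatticePoint.ext hside (by omega) (by omega)

theorem follow_eq_follow_of_proj_eq (hfree : NoShortRelation n k) {W W' : List Move}
    (hlen : W.length = W'.length) (hle : W.length ≤ 4)
    (h : proj n k s (P.follow W) = proj n k s (P.follow W')) : P.follow W = P.follow W' := by
  have hreturn : (P.follow W').follow ((W'.map Move.inv).reverse ++ W) = P.follow W := by
    rw [follow_append, follow_follow_reverse_inv]
  rw [← hreturn] at h ⊢
  exact follow_eq_of_proj_eq hfree (by simp [hlen]) (by simp; omega) h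

theorem proj_step_injective (hfree : NoShortRelation n k) :
    Function.Injective fun m => proj n k s (P.step m) := by
  intro m m' h
  have hstep : P.step m = P.step m' :=
    follow_eq_follow_of_proj_eq hfree (W := [m]) (W' := [m']) rfl (by simp) h
  have hinv : m = m'.inv.inv := eq_inv_of_step_step_eq (P.step m') m'.inv (by simp [hstep])
  rw [hinv]
  cases m' <;> rfl

theorem proj_step_step_ne (hfree : NoShortRelation n k) {m m' : Move} (h : m' ≠ m.inv) :
    proj n k s ((P.step m).step m') ≠ proj n k s P := fun h' =>
  h (eq_inv_of_step_step_eq P m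
    (follow_eq_of_proj_eq hfree (W := [m, m']) (by simp) (by simp) h'))

theorem adj_proj_iff (hfree : NoShortRelation n k) {w : GPVertex n} :
    (GP n k).Adj (proj n k s P) w ↔ ∃ m, w = proj n k s (P.step m) := by
  obtain ⟨b, x, y⟩ := P
  rw [GP, SimpleGraph.fromRel_adj]
  constructor
  · rintro ⟨-, h⟩
    cases b <;> rcases w with w | w <;> simp only [proj, GPRel, cond_true, cond_false,
      or_false, false_or] at h
    · exact ⟨.spoke, by simp [proj, step, h]⟩
    · rcases h with h | h
      · exact ⟨.forward, congrArg Sum.inr (by push_cast [step]; linear_combination h)⟩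
      · exact ⟨.backward, congrArg Sum.inr (by push_cast [step]; linear_combination -h)⟩
    · rcases h with h | h
      · exact ⟨.forward, congrArg Sum.inl (by push_cast [step]; linear_combination h)⟩
      · exact ⟨.backward, congrArg Sum.inl (by push_cast [step]; linear_combination -h)⟩
    · exact ⟨.spoke, by simp [proj, step, h]⟩
  · rintro ⟨m, rfl⟩
    have hone : (1 : ZMod n) ≠ 0 := fun h => by
      simpa using hfree 2 0 (by decide) (by simp) (by grind)
    have hk : (k : ZMod n) ≠ 0 := fun h => by
      simpa using hfree 0 2 (by decide) (by simp) (by grind)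
    refine ⟨?_, ?_⟩
    · rw [Ne, proj_eq_proj_iff]
      cases b <;> cases m <;> simp [step, hone, hk]
    · cases b <;> cases m <;> simp only [proj, step, GPRel, cond_true, cond_false, Bool.not_true,
        Bool.not_false, Int.cast_add, Int.cast_sub, Int.cast_one] <;> grind

theorem exists_reducedWord_of_isPath (hfree : NoShortRelation n k) {v c : GPVertex n}
    {p : (GP n k).Walk v c} (hp : p.IsPath) : ∀ P, v = proj n k s P →
    ∃ W, IsReducedWord W ∧ W.length = p.length ∧ c = proj n k s (P.follow W) ∧
      p.support = (W.scanl step P).map (proj n k s) := by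
  induction p with
  | nil =>
    rintro P rfl
    exact ⟨[], .nil, rfl, rfl, rfl⟩
  | cons hadj p ih =>
    rintro P rfl
    obtain ⟨hp, hfresh⟩ := (SimpleGraph.Walk.cons_isPath_iff _ _).mp hp
    obtain ⟨m, rfl⟩ := (adj_proj_iff hfree).mp hadj
    obtain ⟨W, hW, hlen, rfl, hsupport⟩ := ih hp (P.step m) rfl
    refine ⟨m :: W, ?_, by simp [hlen], rfl, by simp [hsupport]⟩
    refine List.isChain_cons.mpr ⟨?_, hW⟩
    rintro _ hm rfl
    obtain ⟨W, rfl⟩ : ∃ W', W = m.inv :: W' := ⟨_, List.eq_cons_of_mem_head? hm⟩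
    refine hfresh ?_
    rw [hsupport, List.scanl_cons, step_step_inv]
    cases W <;> simp

end LatticePoint

/-- `W` is the word of a shortest path in `GP(n,k)`, of length at most 4, from the projection of
`origin t` to `c`. -/
structure IsGeodesicWord (n k : ℕ) (s : ZMod n) (t : Bool) (c : GPVertex n) (W : List Move) :
    Prop where
  isReducedWord : IsReducedWord W
  length_eq_dist : W.length = (GP n k).dist (proj n k s (origin t)) c
  length_le : W.length ≤ 4
  eq_proj_follow : c = proj n k s ((origin t).follow W)

section

variable {n k : ℕ} {s : ZMod n} {t : Bool} {c : GPVertex n}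

theorem IsGeodesicWord.eq_or_spoke_turn (hfree : NoShortRelation n k) {j l j' l' : Move}
    {W W' : List Move} (h : IsGeodesicWord n k s t c (j :: l :: W))
    (h' : IsGeodesicWord n k s t c (j' :: l' :: W')) :
    (j = j' ∧ l = l') ∨ 2 < (GP n k).dist (proj n k s (origin t)) c ∧
      ((j ≠ .spoke ∧ l = .spoke ∧ j' = .spoke) ∨ (j = .spoke ∧ j' ≠ .spoke ∧ l' = .spoke)) := by
  have hlen : (j :: l :: W).length = (j' :: l' :: W').length :=
    h.length_eq_dist.trans h'.length_eq_dist.symm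
  have hfollow := follow_eq_follow_of_proj_eq hfree hlen h.length_le
    (h.eq_proj_follow.symm.trans h'.eq_proj_follow)
  rw [← h.length_eq_dist]
  rcases eq_or_aroundOctagon_of_follow_eq h.isReducedWord h'.isReducedWord hlen h.length_le hfollow
    with heq | ⟨a, b, ha, hW, hW'⟩ | ⟨a, b, ha, hW', hW⟩ <;> grind

theorem exists_isGeodesicWord_of_mem_branch (hfree : NoShortRelation n k) {v u : GPVertex n}
    (hv : (GP n k).Adj (proj n k s (origin t)) v) (hc : ¬ (GP n k).Adj (proj n k s (origin t)) c)
    (h : c ∈ branch (GP n k) (proj n k s (origin t)) v u) :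
    ∃ j l W, IsGeodesicWord n k s t c (j :: l :: W) ∧ v = proj n k s ((origin t).step j) ∧
      u = proj n k s (((origin t).step j).step l) := by
  obtain rfl | ⟨hdist, p, hp, hprefix⟩ := h
  · exact absurd hv hc
  obtain ⟨W, hW, hlen, hfollow, hsupport⟩ := exists_reducedWord_of_isPath hfree
    (p.isPath_of_length_eq_dist hp) (origin t) rfl
  rw [hsupport] at hprefix
  obtain _ | ⟨j, _ | ⟨l, W⟩⟩ := W
  · simp at hprefix
  · simp at hprefix
  · simp only [List.scanl_cons, List.map_cons, List.cons_prefix_cons] at hprefix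
    refine ⟨j, l, W, ⟨hW, hlen.trans hp, by omega, hfollow⟩, hprefix.2.1, ?_⟩
    cases W <;> simp_all

theorem exists_two_branches_GP (hfree : NoShortRelation n k) {r v : GPVertex n}
    (hv : (GP n k).Adj r v) :
    ∃ u u', u ≠ u' ∧ ((GP n k).Adj v u ∧ u ≠ r) ∧ ((GP n k).Adj v u' ∧ u' ≠ r) := by
  obtain ⟨s, t, rfl⟩ := exists_eq_proj_origin k r
  obtain ⟨j, rfl⟩ := (adj_proj_iff hfree).mp hv
  obtain ⟨l, l', hne, hl, hl'⟩ := j.exists_pair_ne_inv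
  exact ⟨_, _, (proj_step_injective hfree).ne hne,
    ⟨(adj_proj_iff hfree).mpr ⟨l, rfl⟩, proj_step_step_ne hfree hl⟩,
    (adj_proj_iff hfree).mpr ⟨l', rfl⟩, proj_step_step_ne hfree hl'⟩

theorem exists_exclusive_branch_GP (hfree : NoShortRelation n k) (r : GPVertex n) :
    ∃ w, ∀ v, (GP n k).Adj r v → v ≠ w →
      ∃ u, ((GP n k).Adj v u ∧ u ≠ r) ∧ ∀ c ∈ branch (GP n k) r v u, ¬ (GP n k).Adj r c →
        ∀ v', (GP n k).Adj r v' → inBranchOf (GP n k) r v' c → v' = v := by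
  obtain ⟨s, t, rfl⟩ := exists_eq_proj_origin k r
  refine ⟨proj n k s ((origin t).step .spoke), fun v hv hspoke => ?_⟩
  obtain ⟨j, rfl⟩ := (adj_proj_iff hfree).mp hv
  have hj : j ≠ .spoke := by rintro rfl; exact hspoke rfl
  refine ⟨proj n k s (((origin t).step j).step j),
    ⟨(adj_proj_iff hfree).mpr ⟨j, rfl⟩, proj_step_step_ne hfree (j.ne_inv_of_ne_spoke hj)⟩, ?_⟩
  rintro c hc hnadj v' hv' ⟨u', -, -, hu'⟩
  obtain ⟨i, l, W, hW, hi, hl⟩ := exists_isGeodesicWord_of_mem_branch hfree hv hnadj hc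
  obtain rfl := proj_step_injective hfree hi
  obtain rfl := proj_step_injective hfree hl
  obtain ⟨j', l', W', hW', rfl, -⟩ := exists_isGeodesicWord_of_mem_branch hfree hv' hnadj hu'
  have := hW.eq_or_spoke_turn hfree hW'
  grind

theorem separatedBranches_GP (hfree : NoShortRelation n k) (r : GPVertex n) :
    SeparatedBranches (GP n k) r where
  exists_two_branches _ := exists_two_branches_GP hfree
  eq_of_mem_branch v hv c hc u u' hu hu' := by
    obtain ⟨s, t, rfl⟩ := exists_eq_proj_origin k r
    obtain ⟨j, l, W, hW, rfl, rfl⟩ := exists_isGeodesicWord_of_mem_branch hfree hv hc hu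
    obtain ⟨j', l', W', hW', hj, rfl⟩ := exists_isGeodesicWord_of_mem_branch hfree hv hc hu'
    obtain rfl := proj_step_injective hfree hj
    have := hW.eq_or_spoke_turn hfree hW'
    grind
  eq_of_dist_le_two := by
    rintro v v' hv hv' c hc hdist ⟨u, -, -, hu⟩ ⟨u', -, -, hu'⟩
    obtain ⟨s, t, rfl⟩ := exists_eq_proj_origin k r
    obtain ⟨j, l, W, hW, rfl, -⟩ := exists_isGeodesicWord_of_mem_branch hfree hv hc hu
    obtain ⟨j', l', W', hW', rfl, -⟩ := exists_isGeodesicWord_of_mem_branch hfree hv' hc hu'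
    have := hW.eq_or_spoke_turn hfree hW'
    grind
  exists_exclusive_branch := exists_exclusive_branch_GP hfree r

theorem card_neighborSet_GP (hfree : NoShortRelation n k) (r : GPVertex n) :
    Nat.card ((GP n k).neighborSet r) = 3 := by
  obtain ⟨s, t, rfl⟩ := exists_eq_proj_origin k r
  have hrange : (GP n k).neighborSet (proj n k s (origin t)) =
      Set.range fun m => proj n k s ((origin t).step m) := by
    ext w
    simp [adj_proj_iff hfree, eq_comm]
  rw [hrange, Nat.card_range_of_injective (proj_step_injective hfree), Nat.card_eq_fintype_card]
  rfl

theorem trapped_of_branches_covered_GP_general (hfree : NoShortRelation n k)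
    (c₁ c₂ c₃ r : GPVertex n)
    (hcov : ∀ v : GPVertex n, (GP n k).Adj r v →
      (((GP n k).dist r c₁ ≤ 2 ∧ inBranchOf (GP n k) r v c₁) ∨
       ((GP n k).dist r c₂ ≤ 2 ∧ inBranchOf (GP n k) r v c₂) ∨
       ((GP n k).dist r c₃ ≤ 2 ∧ inBranchOf (GP n k) r v c₃)) ∨
      (∀ u : GPVertex n, (GP n k).Adj v u → u ≠ r →
        (c₁ ∈ branch (GP n k) r v u ∨ c₂ ∈ branch (GP n k) r v u ∨
         c₃ ∈ branch (GP n k) r v u))) :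
    Trapped (GP n k) c₁ c₂ c₃ r :=
  (separatedBranches_GP hfree r).trapped (card_neighborSet_GP hfree r).ge hcov

end

/-- If every neighbour `v` of the robber either has a cop at distance at most `2`
from the robber lying in one of its branches, or has a cop on each of its branches,
then the robber is trapped. -/
theorem trapped_of_branches_covered_GP (n k : ℕ)
    (hn : 0 < n) (hk : 0 < k)
    (hi : ∃ i, i ∈ ({1, 2, 3} : Set ℕ) ∧ i * n = 7 * k)
    (h2k : 2 * k < n)
    (hbig : 42 ≤ n ∨ (n = 28 ∧ k = 8) ∨ (n = 35 ∧ k = 10) ∨ (n = 35 ∧ k = 15))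
    (c₁ c₂ c₃ r : GPVertex n)
    (hr : r ∉ ({c₁, c₂, c₃} : Set (GPVertex n)))
    (hcov : ∀ v : GPVertex n, (GP n k).Adj r v →
      (((GP n k).dist r c₁ ≤ 2 ∧ inBranchOf (GP n k) r v c₁) ∨
       ((GP n k).dist r c₂ ≤ 2 ∧ inBranchOf (GP n k) r v c₂) ∨
       ((GP n k).dist r c₃ ≤ 2 ∧ inBranchOf (GP n k) r v c₃)) ∨
      (∀ u : GPVertex n, (GP n k).Adj v u → u ≠ r →
        (c₁ ∈ branch (GP n k) r v u ∨ c₂ ∈ branch (GP n k) r v u ∨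
         c₃ ∈ branch (GP n k) r v u))) :
    Trapped (GP n k) c₁ c₂ c₃ r :=
  trapped_of_branches_covered_GP_general (noShortRelation_of_mul_eq_seven_mul hi hbig)
    c₁ c₂ c₃ r hcov
end

section
/- Let n and k be positive integers with i·n = 7k for some i ∈ {1,2,3} and 2k < n, and suppose that either n ≥ 42 or (n,k) ∈ {(28,8),(35,10),(35,15)}. Let r be a vertex of GP(n,k) and let v, v' be two distinct neighbours of r. Then there do not exist vertices c_1, c_2 with c_1, c_2 ∉ {v, v'} such that each of the two branches of v and each of the two branches of v' contains c_1 or c_2. -/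
open SimpleGraph

/-!
Index the vertices by pairs `(x, y)`, standing for the residue `x + y k`: this lifts `GP(n,k)` to an
infinite graph on two copies of `ℤ × ℤ` which no longer depends on `n` and `k`. Two branches that
meet in `GP(n,k)` but not upstairs produce a closed walk of length at most `8`, hence, as soon as it
uses spokes, a nonzero `(x, y)` with `|x| + |y| ≤ 6` and `n ∣ x + y k`. There is none: if
`x + y k = n d` and `i n = 7 k`, then `7 x = n (7 d - i y)`, and `n ≥ 28` leaves only
`7 d - i y ∈ {-1, 0, 1}`, which the size of `n` or the exceptional values of `k` rule out.
Upstairs, three of the four branches are pairwise disjoint apart from `v` and `v'`, so one of the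
three avoids both cops.
-/

/-- The end vertices of the non-backtracking walks that start `v, u` and make at most two further
steps. It contains the branch of `v` through `u` except for `v` itself, and since its definition
does not involve distances it can be computed upstairs in a covering of `G`. -/
def cone {V : Type*} (G : SimpleGraph V) (v u : V) : Set V :=
  {w | w = u ∨ ∃ x, G.Adj u x ∧ x ≠ v ∧ (w = x ∨ G.Adj x w ∧ w ≠ u)}

theorem mem_cone_of_isPath {V : Type*} {G : SimpleGraph V} {v u w : V} {h : G.Adj v u} :
    ∀ {p : G.Walk u w}, (p.cons h).IsPath → p.length ≤ 2 → w ∈ cone G v u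
  | .nil, _, _ => .inl rfl
  | .cons hx .nil, hpath, _ => by
    refine .inr ⟨w, hx, ?_, .inl rfl⟩
    rintro rfl
    simp at hpath
  | .cons (v := x) hx (.cons hw .nil), hpath, _ => by
    refine .inr ⟨x, hx, ?_, .inr ⟨hw, ?_⟩⟩ <;> rintro rfl <;> simp at hpath
  | .cons _ (.cons _ (.cons _ _)), _, hlen => by simp at hlen

theorem branch_subset_insert_cone {V : Type*} (G : SimpleGraph V) (r v u : V) :
    branch G r v u ⊆ insert v (cone G v u) := by
  rintro w (rfl | ⟨hdist, p, hp, hprefix⟩)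
  · exact Set.mem_insert w _
  have hpath : p.IsPath := p.isPath_of_length_eq_dist hp
  rw [← hp] at hdist
  match p with
  | .nil | .cons _ .nil => simp at hprefix
  | .cons _ (.cons h q) =>
    rw [Walk.support_cons, Walk.support_cons, ← q.cons_tail_support] at hprefix
    simp only [List.cons_prefix_cons] at hprefix
    obtain ⟨-, rfl, rfl, -⟩ := hprefix
    exact Set.mem_insert_of_mem _
      (mem_cone_of_isPath hpath.of_cons (by simpa [add_assoc] using hdist))

theorem cone_subset_image_cone {V W : Type*} {H : SimpleGraph W} {G : SimpleGraph V} {π : W → V}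
    (hlift : ∀ p w, G.Adj (π p) w → ∃ q, H.Adj p q ∧ π q = w) (p q : W) :
    cone G (π p) (π q) ⊆ π '' cone H p q := by
  rintro w (rfl | ⟨x, hqx, hxp, rfl | ⟨hxw, hwq⟩⟩)
  · exact ⟨q, .inl rfl, rfl⟩
  · obtain ⟨x, hqx', rfl⟩ := hlift q w hqx
    exact ⟨x, .inr ⟨x, hqx', ne_of_apply_ne π hxp, .inl rfl⟩, rfl⟩
  · obtain ⟨x, hqx', rfl⟩ := hlift q x hqx
    obtain ⟨w, hxw', rfl⟩ := hlift x w hxw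
    exact ⟨w, .inr ⟨x, hqx', ne_of_apply_ne π hxp, .inr ⟨hxw', ne_of_apply_ne π hwq⟩⟩, rfl⟩

theorem exists_notMem_of_pairwise_disjoint {α : Type*} {S : Fin 3 → Set α}
    (hS : Pairwise fun i j => Disjoint (S i) (S j)) (c₁ c₂ : α) :
    ∃ i, c₁ ∉ S i ∧ c₂ ∉ S i := by
  by_contra! hcover
  obtain ⟨i, j, hij, hiff⟩ := Fintype.exists_ne_map_eq_of_card_lt (fun i => c₁ ∈ S i) (by simp)
  have hdisj := Set.disjoint_left.mp (hS hij)
  by_cases hi : c₁ ∈ S i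
  · exact hdisj hi (hiff ▸ hi)
  · exact hdisj (hcover i hi) (hcover j (hiff ▸ hi))

/-- The common unfolding of the graphs `GP(n,k)`, obtained by replacing the indices modulo `n`
by pairs `(x, y)`, read as `x + y k`. Rim edges on the left copy of `ℤ × ℤ` change `x`, rim edges
on the right copy change `y`, and spokes join equal pairs. -/
def unfoldedGP : SimpleGraph (ℤ × ℤ ⊕ ℤ × ℤ) where
  Adj
    | .inl p, .inl q => (p.1 - q.1).natAbs = 1 ∧ p.2 = q.2
    | .inr p, .inr q => p.1 = q.1 ∧ (p.2 - q.2).natAbs = 1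
    | .inl p, .inr q => p = q
    | .inr p, .inl q => p = q
  symm := by
    constructor
    rintro (p | p) (q | q) h
    · exact ⟨by omega, h.2.symm⟩
    · exact h.symm
    · exact h.symm
    · exact ⟨h.1.symm, by omega⟩
  loopless := by
    constructor
    rintro (p | p) h <;> simp at h

/-- Equal sides and distinct pairs at `ℓ¹`-distance at most `6`, or opposite sides. Such vertices
keep distinct images in `GP(n,k)` as long as no nonzero `(x, y)` with `|x| + |y| ≤ 6` satisfies
`n ∣ x + y k`. -/
def Distinguishable : ℤ × ℤ ⊕ ℤ × ℤ → ℤ × ℤ ⊕ ℤ × ℤ → Prop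
  | .inl p, .inl q | .inr p, .inr q =>
    p ≠ q ∧ (p.1 - q.1).natAbs + (p.2 - q.2).natAbs ≤ 6
  | _, _ => True

theorem distinguishable_of_adj {p q : ℤ × ℤ ⊕ ℤ × ℤ} (h : unfoldedGP.Adj p q) :
    Distinguishable p q := by
  rcases p with p | p <;> rcases q with q | q <;>
    simp only [unfoldedGP, Distinguishable, ne_eq, Prod.ext_iff] at h ⊢ <;> omega

theorem Distinguishable.symm {p q : ℤ × ℤ ⊕ ℤ × ℤ} (h : Distinguishable p q) :
    Distinguishable q p := by
  rcases p with p | p <;> rcases q with q | q <;>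
    simp only [Distinguishable, ne_eq] at h ⊢ <;>
    exact ⟨Ne.symm h.1, by omega⟩

/-- Two sets of vertices of the unfolded graph that stay disjoint in `GP(n,k)` because any two of
their elements are distinguishable. -/
def Separated (C D : Set (ℤ × ℤ ⊕ ℤ × ℤ)) : Prop :=
  ∀ p ∈ C, ∀ q ∈ D, Distinguishable p q

theorem Separated.symm {C D : Set (ℤ × ℤ ⊕ ℤ × ℤ)} (h : Separated C D) : Separated D C :=
  fun p hp q hq => (h q hq p hp).symm

theorem Separated.mono {C C' D D' : Set (ℤ × ℤ ⊕ ℤ × ℤ)} (hC : C ⊆ C') (hD : D ⊆ D')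
    (h : Separated C' D') : Separated C D :=
  fun p hp q hq => h p (hC hp) q (hD hq)

/-- The symmetry of the unfolded graph that exchanges the two sides and the two coordinates. It
reduces a robber on the inner rim to one on the outer rim. -/
def unfoldedGPSwap : unfoldedGP ≃g unfoldedGP where
  toEquiv := (Equiv.sumComm _ _).trans (.sumCongr (.prodComm _ _) (.prodComm _ _))
  map_rel_iff' := by
    rintro (p | p) (q | q) <;> simp [unfoldedGP, Prod.ext_iff, and_comm]

/-- `π` is a covering map from the unfolded graph to `G` that separates distinguishable vertices.
Uniqueness of lifts of edges is not a field: it follows from `map_ne`. -/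
structure IsUnfolding {V : Type*} (G : SimpleGraph V) (π : ℤ × ℤ ⊕ ℤ × ℤ → V) : Prop where
  map_adj : ∀ p q, unfoldedGP.Adj p q → G.Adj (π p) (π q)
  exists_lift : ∀ p w, G.Adj (π p) w → ∃ q, unfoldedGP.Adj p q ∧ π q = w
  map_ne : ∀ p q, Distinguishable p q → π p ≠ π q

theorem distinguishable_swap {p q : ℤ × ℤ ⊕ ℤ × ℤ} :
    Distinguishable (unfoldedGPSwap p) (unfoldedGPSwap q) ↔ Distinguishable p q := by
  rcases p with p | p <;> rcases q with q | q <;>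
    simp [Distinguishable, unfoldedGPSwap, Prod.ext_iff, and_comm, add_comm]

namespace IsUnfolding

variable {V : Type*} {G : SimpleGraph V} {π : ℤ × ℤ ⊕ ℤ × ℤ → V}

theorem comp_swap (hπ : IsUnfolding G π) : IsUnfolding G (π ∘ unfoldedGPSwap) where
  map_adj p q h := hπ.map_adj _ _ (unfoldedGPSwap.map_adj_iff.mpr h)
  exists_lift p w h := by
    obtain ⟨q, hq, rfl⟩ := hπ.exists_lift _ _ h
    exact ⟨unfoldedGPSwap.symm q, by simpa using unfoldedGPSwap.symm.map_adj_iff.mpr hq, by simp⟩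
  map_ne p q h := hπ.map_ne _ _ (distinguishable_swap.mpr h)

theorem disjoint_image (hπ : IsUnfolding G π) {C D : Set (ℤ × ℤ ⊕ ℤ × ℤ)}
    (h : Separated C D) : Disjoint (π '' C) (π '' D) := by
  rw [Set.disjoint_left]
  rintro _ ⟨p, hp, rfl⟩ ⟨q, hq, hqp⟩
  exact hπ.map_ne p q (h p hp q hq) hqp.symm

theorem map_ne_of_adj_of_adj (hπ : IsUnfolding G π) {p q r : ℤ × ℤ ⊕ ℤ × ℤ}
    (hpq : unfoldedGP.Adj p q) (hqr : unfoldedGP.Adj q r) (hne : p ≠ r) : π p ≠ π r := by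
  apply hπ.map_ne
  rcases p with p | p <;> rcases q with q | q <;> rcases r with r | r <;>
    simp only [unfoldedGP, Distinguishable, ne_eq, Prod.ext_iff, Sum.inl.injEq, Sum.inr.injEq]
      at hpq hqr hne ⊢ <;> omega

end IsUnfolding

/-- A set containing the cone entered from the left origin by two rim steps in direction `ε`,
described by inequalities that suffice for separation. -/
def rimRimRegion (ε : ℤˣ) : Set (ℤ × ℤ ⊕ ℤ × ℤ) :=
  {w | w.elim (fun p : ℤ × ℤ => 2 ≤ ε * p.1 ∧ ε * p.1 ≤ 4 ∧ p.2 = 0)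
    (fun p : ℤ × ℤ => 2 ≤ ε * p.1 ∧ p.1.natAbs + p.2.natAbs ≤ 3)}

/-- A set containing the cone entered from the left origin by a rim step in direction `ε` and a
spoke. -/
def rimSpokeRegion (ε : ℤˣ) : Set (ℤ × ℤ ⊕ ℤ × ℤ) :=
  {w | w.elim (fun p : ℤ × ℤ => p.1 = ε ∧ p.2.natAbs = 1)
    (fun p : ℤ × ℤ => p.1 = ε ∧ p.2.natAbs ≤ 2)}

/-- A set containing the cone entered from the left origin by a spoke and a rim step in direction
`ε`. -/
def spokeRimRegion (ε : ℤˣ) : Set (ℤ × ℤ ⊕ ℤ × ℤ) :=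
  {w | w.elim (fun p : ℤ × ℤ => 1 ≤ ε * p.2 ∧ p.1.natAbs + p.2.natAbs ≤ 2)
    (fun p : ℤ × ℤ => p.1 = 0 ∧ 1 ≤ ε * p.2 ∧ ε * p.2 ≤ 3)}

theorem cone_rim_rim_subset (ε : ℤˣ) :
    cone unfoldedGP (.inl (ε, 0)) (.inl (2 * ε, 0)) ⊆ rimRimRegion ε := by
  rcases Int.units_eq_one_or ε with rfl | rfl <;>
    rintro (w | w) (h | ⟨x | x, hx, hxv, h | ⟨hxw, hwu⟩⟩) <;>
    simp only [unfoldedGP, rimRimRegion, Set.mem_ofPred_eq, Sum.elim_inl, Sum.elim_inr, ne_eq,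
      Sum.inl.injEq, Sum.inr.injEq, reduceCtorEq, Prod.ext_iff, Units.val_one, Units.val_neg]
      at * <;>
    omega

theorem cone_rim_spoke_subset (ε : ℤˣ) :
    cone unfoldedGP (.inl (ε, 0)) (.inr (ε, 0)) ⊆ rimSpokeRegion ε := by
  rintro (w | w) (h | ⟨x | x, hx, hxv, h | ⟨hxw, hwu⟩⟩) <;>
    simp only [unfoldedGP, rimSpokeRegion, Set.mem_ofPred_eq, Sum.elim_inl, Sum.elim_inr, ne_eq,
      Sum.inl.injEq, Sum.inr.injEq, reduceCtorEq, Prod.ext_iff] at * <;>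
    omega

theorem cone_spoke_rim_subset (ε : ℤˣ) :
    cone unfoldedGP (.inr 0) (.inr (0, ε)) ⊆ spokeRimRegion ε := by
  rcases Int.units_eq_one_or ε with rfl | rfl <;>
    rintro (w | w) (h | ⟨x | x, hx, hxv, h | ⟨hxw, hwu⟩⟩) <;>
    simp only [unfoldedGP, spokeRimRegion, Set.mem_ofPred_eq, Sum.elim_inl, Sum.elim_inr, ne_eq,
      Sum.inl.injEq, Sum.inr.injEq, reduceCtorEq, Prod.ext_iff, Prod.fst_zero, Prod.snd_zero,
      Units.val_one, Units.val_neg] at * <;>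
    omega

theorem separated_rimRim_rimSpoke {ε δ : ℤˣ} :
    Separated (rimRimRegion ε) (rimSpokeRegion δ) := by
  intro p hp q hq
  rcases Int.units_eq_one_or ε with rfl | rfl <;> rcases Int.units_eq_one_or δ with rfl | rfl <;>
    rcases p with p | p <;> rcases q with q | q <;>
    simp only [rimRimRegion, rimSpokeRegion, Distinguishable, Set.mem_ofPred_eq, Sum.elim_inl,
      Sum.elim_inr, ne_eq, Prod.ext_iff, Units.val_one, Units.val_neg] at * <;>
    omega

theorem separated_rimSpoke_rimSpoke {ε δ : ℤˣ} (hne : ε ≠ δ) :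
    Separated (rimSpokeRegion ε) (rimSpokeRegion δ) := by
  intro p hp q hq
  obtain rfl := Int.units_ne_iff_eq_neg.mp hne
  rcases Int.units_eq_one_or δ with rfl | rfl <;>
    rcases p with p | p <;> rcases q with q | q <;>
    simp only [rimSpokeRegion, Distinguishable, Set.mem_ofPred_eq, Sum.elim_inl,
      Sum.elim_inr, ne_eq, Prod.ext_iff, Units.val_one, Units.val_neg] at * <;>
    omega

theorem separated_rimRim_spokeRim {ε δ : ℤˣ} :
    Separated (rimRimRegion ε) (spokeRimRegion δ) := by
  intro p hp q hq
  rcases Int.units_eq_one_or ε with rfl | rfl <;> rcases Int.units_eq_one_or δ with rfl | rfl <;>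
    rcases p with p | p <;> rcases q with q | q <;>
    simp only [rimRimRegion, spokeRimRegion, Distinguishable, Set.mem_ofPred_eq, Sum.elim_inl,
      Sum.elim_inr, ne_eq, Prod.ext_iff, Units.val_one, Units.val_neg] at * <;>
    omega

theorem separated_spokeRim_spokeRim {ε δ : ℤˣ} (hne : ε ≠ δ) :
    Separated (spokeRimRegion ε) (spokeRimRegion δ) := by
  intro p hp q hq
  obtain rfl := Int.units_ne_iff_eq_neg.mp hne
  rcases Int.units_eq_one_or δ with rfl | rfl <;>
    rcases p with p | p <;> rcases q with q | q <;>
    simp only [spokeRimRegion, Distinguishable, Set.mem_ofPred_eq, Sum.elim_inl,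
      Sum.elim_inr, ne_eq, Prod.ext_iff, Units.val_one, Units.val_neg, neg_neg] at * <;>
    omega

/-- The lattice `{(x, y) : n ∣ x + y k}`, whose vectors say which pairs have equal index modulo
`n`, contains no nonzero vector of `ℓ¹`-norm at most `6`. -/
def HasNoShortRelation (n k : ℕ) : Prop :=
  ∀ x y : ℤ, x.natAbs + y.natAbs ≤ 6 → (n : ℤ) ∣ x + y * k → x = 0 ∧ y = 0

theorem hasNoShortRelation_of_mul_eq_seven_mul {n k : ℕ}
    (hi : ∃ i, i ∈ ({1, 2, 3} : Set ℕ) ∧ i * n = 7 * k)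
    (hbig : 42 ≤ n ∨ (n = 28 ∧ k = 8) ∨ (n = 35 ∧ k = 10) ∨ (n = 35 ∧ k = 15)) :
    HasNoShortRelation n k := by
  rintro x y hxy ⟨d, hd⟩
  obtain ⟨i, hi, hik⟩ := hi
  simp only [Set.mem_insert_iff, Set.mem_singleton_iff] at hi
  obtain ⟨t, ht⟩ : ∃ t : ℤ, t = 7 * d - i * y := ⟨_, rfl⟩
  have hx : 7 * x = n * t := by
    rw [ht]
    linear_combination 7 * hd + y * (by exact_mod_cast hik : (i * n : ℤ) = 7 * k)
  obtain ⟨ht_ge, ht_le⟩ : -1 ≤ t ∧ t ≤ 1 := by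
    have hn : (28 : ℤ) ≤ n := by omega
    constructor <;> by_contra! <;> nlinarith [show 7 * x ≤ 42 by omega, show -42 ≤ 7 * x by omega]
  interval_cases t <;> rcases hi with rfl | rfl | rfl <;> omega

/-- The residue `i + x + y k` modulo `n` that the pair `(x, y)` stands for. -/
def gpIndex {n : ℕ} (k : ℕ) (i : ZMod n) (p : ℤ × ℤ) : ZMod n := i + p.1 + p.2 * k

theorem gpIndex_add_one_left {n : ℕ} (k : ℕ) (i : ZMod n) (x y : ℤ) :
    gpIndex k i (x + 1, y) = gpIndex k i (x, y) + 1 := by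
  simp only [gpIndex]
  push_cast
  ring

theorem gpIndex_add_one_right {n : ℕ} (k : ℕ) (i : ZMod n) (x y : ℤ) :
    gpIndex k i (x, y + 1) = gpIndex k i (x, y) + k := by
  simp only [gpIndex]
  push_cast
  ring

theorem gpIndex_ne {n k : ℕ} (h : HasNoShortRelation n k) (i : ZMod n) {p q : ℤ × ℤ}
    (hne : p ≠ q) (hle : (p.1 - q.1).natAbs + (p.2 - q.2).natAbs ≤ 6) :
    gpIndex k i p ≠ gpIndex k i q := by
  intro heq
  have hdvd : (n : ℤ) ∣ (p.1 - q.1) + (p.2 - q.2) * k := by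
    rw [← ZMod.intCast_zmod_eq_zero_iff_dvd]
    simp only [gpIndex] at heq
    push_cast
    linear_combination heq
  obtain ⟨hx, hy⟩ := h _ _ hle hdvd
  exact hne (Prod.ext (sub_eq_zero.mp hx) (sub_eq_zero.mp hy))

/-- The map from the unfolded graph to `GP(n,k)` that sends the left origin to `a_i`. -/
def gpUnfolding {n : ℕ} (k : ℕ) (i : ZMod n) : ℤ × ℤ ⊕ ℤ × ℤ → GPVertex n :=
  Sum.map (gpIndex k i) (gpIndex k i)

theorem gpUnfolding_ne {n k : ℕ} (h : HasNoShortRelation n k) (i : ZMod n)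
    {p q : ℤ × ℤ ⊕ ℤ × ℤ} (hpq : Distinguishable p q) :
    gpUnfolding k i p ≠ gpUnfolding k i q := by
  rcases p with p | p <;> rcases q with q | q <;>
    simp only [gpUnfolding, Sum.map_inl, Sum.map_inr, ne_eq, Sum.inl.injEq, Sum.inr.injEq,
      reduceCtorEq, not_false_eq_true]
  all_goals exact gpIndex_ne h i hpq.1 hpq.2

theorem gpRel_gpUnfolding {n k : ℕ} (i : ZMod n) {p q : ℤ × ℤ ⊕ ℤ × ℤ}
    (h : unfoldedGP.Adj p q) :
    GPRel n k (gpUnfolding k i p) (gpUnfolding k i q) ∨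
      GPRel n k (gpUnfolding k i q) (gpUnfolding k i p) := by
  rcases p with ⟨x, y⟩ | ⟨x, y⟩ <;> rcases q with ⟨x', y'⟩ | ⟨x', y'⟩
  · obtain ⟨hx : (x - x').natAbs = 1, rfl : y = y'⟩ := h
    obtain rfl | rfl : x' = x + 1 ∨ x = x' + 1 := by omega
    · exact .inl (gpIndex_add_one_left ..)
    · exact .inr (gpIndex_add_one_left ..)
  · exact .inl (congrArg _ h.symm)
  · exact .inr (congrArg _ h)
  · obtain ⟨rfl : x = x', hy : (y - y').natAbs = 1⟩ := h
    obtain rfl | rfl : y' = y + 1 ∨ y = y' + 1 := by omega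
    · exact .inl (gpIndex_add_one_right ..)
    · exact .inr (gpIndex_add_one_right ..)

theorem exists_gpUnfolding_eq_of_adj {n k : ℕ} (i : ZMod n) {p : ℤ × ℤ ⊕ ℤ × ℤ} {w : GPVertex n}
    (h : (GP n k).Adj (gpUnfolding k i p) w) :
    ∃ q, unfoldedGP.Adj p q ∧ gpUnfolding k i q = w := by
  replace h := ((SimpleGraph.fromRel_adj _ _ _).mp h).2
  rcases p with ⟨x, y⟩ | ⟨x, y⟩ <;> rcases w with w | w
  · rcases h with h | h
    · exact ⟨.inl (x + 1, y), by simp [unfoldedGP],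
        congrArg Sum.inl ((gpIndex_add_one_left ..).trans h.symm)⟩
    · have hback := gpIndex_add_one_left k i (x - 1) y
      rw [sub_add_cancel] at hback
      exact ⟨.inl (x - 1, y), by simp [unfoldedGP],
        congrArg Sum.inl (add_right_cancel (hback.symm.trans h))⟩
  · exact ⟨.inr (x, y), rfl, congrArg Sum.inr (h.resolve_right id).symm⟩
  · exact ⟨.inl (x, y), rfl, congrArg Sum.inl (h.resolve_left id)⟩
  · rcases h with h | h
    · exact ⟨.inr (x, y + 1), by simp [unfoldedGP],
        congrArg Sum.inr ((gpIndex_add_one_right ..).trans h.symm)⟩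
    · have hback := gpIndex_add_one_right k i x (y - 1)
      rw [sub_add_cancel] at hback
      exact ⟨.inr (x, y - 1), by simp [unfoldedGP],
        congrArg Sum.inr (add_right_cancel (hback.symm.trans h))⟩

theorem isUnfolding_gpUnfolding {n k : ℕ} (h : HasNoShortRelation n k) (i : ZMod n) :
    IsUnfolding (GP n k) (gpUnfolding k i) where
  map_adj _ _ hpq := (SimpleGraph.fromRel_adj _ _ _).mpr
    ⟨gpUnfolding_ne h i (distinguishable_of_adj hpq), gpRel_gpUnfolding i hpq⟩
  exists_lift _ _ := exists_gpUnfolding_eq_of_adj i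
  map_ne _ _ := gpUnfolding_ne h i

theorem exists_isUnfolding {n k : ℕ} (h : HasNoShortRelation n k) :
    ∀ r : GPVertex n, ∃ π, IsUnfolding (GP n k) π ∧ π (.inl 0) = r
  | .inl i => ⟨_, isUnfolding_gpUnfolding h i, by simp [gpUnfolding, gpIndex]⟩
  | .inr i => ⟨_, (isUnfolding_gpUnfolding h i).comp_swap, by
      simp [gpUnfolding, gpIndex, unfoldedGPSwap]⟩

theorem eq_of_unfoldedGP_adj_zero : ∀ {p : ℤ × ℤ ⊕ ℤ × ℤ}, unfoldedGP.Adj (.inl 0) p →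
    (∃ ε : ℤˣ, p = .inl (ε, 0)) ∨ p = .inr 0
  | .inr _, h => .inr (congrArg Sum.inr h.symm)
  | .inl (x, y), ⟨hx, (hy : 0 = y)⟩ => by
    obtain rfl | rfl : x = 1 ∨ x = -1 := by simp only [Prod.fst_zero] at hx; omega
    · exact .inl ⟨1, by simp [← hy]⟩
    · exact .inl ⟨-1, by simp [← hy]⟩

/-- Among the branches of the neighbours `p` and `q` of the left origin there are three whose cones
are pairwise separated; the `j`-th of them is the branch of `P j` through `U j`. -/
def HasSeparatedBranches (p q : ℤ × ℤ ⊕ ℤ × ℤ) : Prop :=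
  ∃ P U : Fin 3 → ℤ × ℤ ⊕ ℤ × ℤ,
    (∀ j, P j ∈ ({p, q} : Set _) ∧ unfoldedGP.Adj (P j) (U j) ∧ U j ≠ .inl 0) ∧
    Pairwise fun i j => Separated (cone unfoldedGP (P i) (U i)) (cone unfoldedGP (P j) (U j))

theorem pairwise_fin_three {r : Fin 3 → Fin 3 → Prop} (hr : ∀ i j, r i j → r j i)
    (h₀₁ : r 0 1) (h₀₂ : r 0 2) (h₁₂ : r 1 2) : Pairwise r := by
  intro i j hij
  fin_cases i <;> fin_cases j <;> first | exact absurd rfl hij | assumption | (apply hr; assumption)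

theorem unfoldedGP_adj_rim_rim (ε : ℤˣ) : unfoldedGP.Adj (.inl (ε, 0)) (.inl (2 * ε, 0)) := by
  have hε := Int.units_natAbs ε
  exact ⟨by omega, rfl⟩

theorem hasSeparatedBranches_rim_rim {ε δ : ℤˣ} (hne : ε ≠ δ) :
    HasSeparatedBranches (.inl (ε, 0)) (.inl (δ, 0)) := by
  refine ⟨![.inl (ε, 0), .inl (ε, 0), .inl (δ, 0)], ![.inl (2 * ε, 0), .inr (ε, 0), .inr (δ, 0)],
    ?_, pairwise_fin_three (fun _ _ => Separated.symm) ?_ ?_ ?_⟩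
  · intro j
    fin_cases j
    · exact ⟨.inl rfl, unfoldedGP_adj_rim_rim ε, by simp⟩
    · exact ⟨.inl rfl, rfl, by simp⟩
    · exact ⟨.inr rfl, rfl, by simp⟩
  · exact separated_rimRim_rimSpoke.mono (cone_rim_rim_subset ε) (cone_rim_spoke_subset ε)
  · exact separated_rimRim_rimSpoke.mono (cone_rim_rim_subset ε) (cone_rim_spoke_subset δ)
  · exact (separated_rimSpoke_rimSpoke hne).mono
      (cone_rim_spoke_subset ε) (cone_rim_spoke_subset δ)

theorem hasSeparatedBranches_rim_spoke (ε : ℤˣ) :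
    HasSeparatedBranches (.inl (ε, 0)) (.inr 0) := by
  refine ⟨![.inl (ε, 0), .inr 0, .inr 0], ![.inl (2 * ε, 0), .inr (0, 1), .inr (0, -1)],
    ?_, pairwise_fin_three (fun _ _ => Separated.symm) ?_ ?_ ?_⟩
  · intro j
    fin_cases j
    · exact ⟨.inl rfl, unfoldedGP_adj_rim_rim ε, by simp⟩
    · exact ⟨.inr rfl, ⟨rfl, rfl⟩, by simp⟩
    · exact ⟨.inr rfl, ⟨rfl, rfl⟩, by simp⟩
  · exact separated_rimRim_spokeRim.mono (cone_rim_rim_subset ε) (cone_spoke_rim_subset 1)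
  · exact separated_rimRim_spokeRim.mono (cone_rim_rim_subset ε) (cone_spoke_rim_subset (-1))
  · exact (separated_spokeRim_spokeRim (by decide)).mono
      (cone_spoke_rim_subset 1) (cone_spoke_rim_subset (-1))

theorem HasSeparatedBranches.symm {p q : ℤ × ℤ ⊕ ℤ × ℤ} (h : HasSeparatedBranches p q) :
    HasSeparatedBranches q p := by
  simpa only [HasSeparatedBranches, Set.pair_comm q p] using h

theorem hasSeparatedBranches_of_adj {p q : ℤ × ℤ ⊕ ℤ × ℤ} (hp : unfoldedGP.Adj (.inl 0) p)
    (hq : unfoldedGP.Adj (.inl 0) q) (hne : p ≠ q) : HasSeparatedBranches p q := by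
  rcases eq_of_unfoldedGP_adj_zero hp with ⟨ε, rfl⟩ | rfl <;>
    rcases eq_of_unfoldedGP_adj_zero hq with ⟨δ, rfl⟩ | rfl
  · exact hasSeparatedBranches_rim_rim fun h => hne (by rw [h])
  · exact hasSeparatedBranches_rim_spoke ε
  · exact (hasSeparatedBranches_rim_spoke δ).symm
  · exact absurd rfl hne

theorem IsUnfolding.exists_branch_notMem {V : Type*} {G : SimpleGraph V}
    {π : ℤ × ℤ ⊕ ℤ × ℤ → V} (hπ : IsUnfolding G π) {v v' : V}
    (hv : G.Adj (π (.inl 0)) v) (hv' : G.Adj (π (.inl 0)) v') (hne : v ≠ v') {c₁ c₂ : V}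
    (hc₁ : c₁ ∉ ({v, v'} : Set V)) (hc₂ : c₂ ∉ ({v, v'} : Set V)) :
    ∃ x ∈ ({v, v'} : Set V), ∃ u, G.Adj x u ∧ u ≠ π (.inl 0) ∧
      c₁ ∉ branch G (π (.inl 0)) x u ∧ c₂ ∉ branch G (π (.inl 0)) x u := by
  obtain ⟨p, hp, rfl⟩ := hπ.exists_lift _ _ hv
  obtain ⟨q, hq, rfl⟩ := hπ.exists_lift _ _ hv'
  obtain ⟨P, U, hPU, hsep⟩ := hasSeparatedBranches_of_adj hp hq (ne_of_apply_ne π hne)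
  obtain ⟨j, hj₁, hj₂⟩ := exists_notMem_of_pairwise_disjoint
    (fun _ _ hij => hπ.disjoint_image (hsep hij)) c₁ c₂
  obtain ⟨hP, hadj, hU⟩ := hPU j
  have hπP : π (P j) ∈ ({π p, π q} : Set V) := by
    rw [← Set.image_pair]
    exact Set.mem_image_of_mem π hP
  have hP₀ : unfoldedGP.Adj (.inl 0) (P j) := by
    rcases hP with h | h <;> rw [h] <;> assumption
  have notMem_branch {c : V} (hc : c ∉ ({π p, π q} : Set V))
      (hcone : c ∉ π '' cone unfoldedGP (P j) (U j)) :
      c ∉ branch G (π (.inl 0)) (π (P j)) (π (U j)) := fun hmem =>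
    (branch_subset_insert_cone _ _ _ _ hmem).elim (fun h => hc (h ▸ hπP))
      fun h => hcone (cone_subset_image_cone hπ.exists_lift _ _ h)
  exact ⟨π (P j), hπP, π (U j), hπ.map_adj _ _ hadj,
    hπ.map_ne_of_adj_of_adj hadj.symm hP₀.symm hU,
    notMem_branch hc₁ hj₁, notMem_branch hc₂ hj₂⟩

theorem two_cops_cannot_cover_four_branches_GP_general (n k : ℕ) (h : HasNoShortRelation n k)
    (r v v' : GPVertex n) (hv : (GP n k).Adj r v) (hv' : (GP n k).Adj r v') (hne : v ≠ v') :
    ¬ ∃ c₁ c₂ : GPVertex n,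
        c₁ ∉ ({v, v'} : Set (GPVertex n)) ∧ c₂ ∉ ({v, v'} : Set (GPVertex n)) ∧
        (∀ u : GPVertex n, (GP n k).Adj v u → u ≠ r →
          (c₁ ∈ branch (GP n k) r v u ∨ c₂ ∈ branch (GP n k) r v u)) ∧
        (∀ u : GPVertex n, (GP n k).Adj v' u → u ≠ r →
          (c₁ ∈ branch (GP n k) r v' u ∨ c₂ ∈ branch (GP n k) r v' u)) := by
  rintro ⟨c₁, c₂, hc₁, hc₂, hcover, hcover'⟩
  obtain ⟨π, hπ, rfl⟩ := exists_isUnfolding h r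
  obtain ⟨x, rfl | rfl, u, hxu, hur, hu₁, hu₂⟩ :=
    hπ.exists_branch_notMem hv hv' hne hc₁ hc₂
  · exact (hcover u hxu hur).elim hu₁ hu₂
  · exact (hcover' u hxu hur).elim hu₁ hu₂

/-- Two cops, neither placed on `v` or `v'`, cannot cover all four branches of two
distinct neighbours `v, v'` of the robber `r`. -/
theorem two_cops_cannot_cover_four_branches_GP (n k : ℕ)
    (hn : 0 < n) (hk : 0 < k)
    (hi : ∃ i, i ∈ ({1, 2, 3} : Set ℕ) ∧ i * n = 7 * k)
    (h2k : 2 * k < n)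
    (hbig : 42 ≤ n ∨ (n = 28 ∧ k = 8) ∨ (n = 35 ∧ k = 10) ∨ (n = 35 ∧ k = 15))
    (r v v' : GPVertex n) (hv : (GP n k).Adj r v) (hv' : (GP n k).Adj r v')
    (hne : v ≠ v') :
    ¬ ∃ c₁ c₂ : GPVertex n,
        c₁ ∉ ({v, v'} : Set (GPVertex n)) ∧ c₂ ∉ ({v, v'} : Set (GPVertex n)) ∧
        (∀ u : GPVertex n, (GP n k).Adj v u → u ≠ r →
          (c₁ ∈ branch (GP n k) r v u ∨ c₂ ∈ branch (GP n k) r v u)) ∧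
        (∀ u : GPVertex n, (GP n k).Adj v' u → u ≠ r →
          (c₁ ∈ branch (GP n k) r v' u ∨ c₂ ∈ branch (GP n k) r v' u)) := by
  exact two_cops_cannot_cover_four_branches_GP_general n k
    (hasNoShortRelation_of_mul_eq_seven_mul hi hbig) r v v' hv hv' hne
end

section
/- Let n and k be positive integers with i·n = 7k for some i ∈ {1,2,3} and 2k < n, and suppose that either n ≥ 42 or (n,k) ∈ {(28,8),(35,10),(35,15)}. Then for any vertices c_1, c_2, c_3 of GP(n,k) (the positions of three cops), there exists a vertex r with r ∉ {c_1, c_2, c_3} such that the configuration (c_1,c_2,c_3; r) is not trapped. -/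
open SimpleGraph

/-!
A robber starting at distance more than two from every cop is not trapped, provided that he has a
neighbour at all. In a graph of maximum degree `Δ` at most `Δ² + 1` vertices lie within distance
two of a given cop. Since `GP(n,k)` has maximum degree three, three cops cover at most 30 of its
`2n` vertices in this way. Mathlib's balls are open, so the vertices within distance two of `c`
form `G.ball c 3`.
-/

lemma encard_triple_le {α : Type*} (x y z : α) : ({x, y, z} : Set α).encard ≤ 3 :=
  calc ({x, y, z} : Set α).encard
      ≤ ({y, z} : Set α).encard + 1 := Set.encard_insert_le _ _
    _ ≤ ({z} : Set α).encard + 1 + 1 := by gcongr; exact Set.encard_insert_le _ _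
    _ = 3 := by rw [Set.encard_singleton]; norm_num

section BoundedDegree

variable {V : Type*} {G : SimpleGraph V} {Δ : ℕ}

lemma mem_ball_three_iff {c v : V} :
    v ∈ G.ball c 3 ↔ c = v ∨ G.Adj c v ∨ ∃ u, G.Adj c u ∧ G.Adj u v := by
  have hball : v ∈ G.ball c 3 ↔ G.edist c v ≤ 2 := by
    rw [mem_ball, edist_comm, ← two_add_one_eq_three, ENat.lt_add_one_iff (by simp)]
  rw [hball, ← not_lt, two_lt_edist_iff]
  simp only [ne_eq, not_and_or, not_not, ← Set.nonempty_iff_ne_empty, Set.Nonempty,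
    mem_commonNeighbors, G.adj_comm v]

-- Removing `c` from each neighbourhood makes room for `u`, which is what gives `Δ² + 1` below
-- rather than `Δ² + Δ + 1`.
lemma ball_three_subset (c : V) :
    G.ball c 3 ⊆ insert c (⋃ u ∈ G.neighborSet c, insert u (G.neighborSet u \ {c})) := by
  intro v hv
  by_cases hvc : v = c
  · exact Or.inl hvc
  right
  rcases (mem_ball_three_iff.1 hv).resolve_left (Ne.symm hvc) with hadj | ⟨u, hcu, huv⟩
  · exact Set.mem_biUnion hadj (Set.mem_insert v _)
  · exact Set.mem_biUnion hcu (Or.inr ⟨huv, hvc⟩)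

lemma encard_insert_neighborSet_sdiff_le {c u : V} (hcu : G.Adj c u) :
    (insert u (G.neighborSet u \ {c})).encard ≤ (G.neighborSet u).encard :=
  calc (insert u (G.neighborSet u \ {c})).encard
      ≤ (G.neighborSet u \ {c}).encard + 1 := Set.encard_insert_le _ _
    _ = (G.neighborSet u).encard := Set.encard_sdiff_singleton_add_one hcu.symm

lemma encard_ball_three_le (hΔ : ∀ v, (G.neighborSet v).encard ≤ Δ) (c : V) :
    (G.ball c 3).encard ≤ Δ ^ 2 + 1 := by
  have hfin : (G.neighborSet c).Finite := Set.finite_of_encard_le_coe (hΔ c)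
  have hsecond :
      (⋃ u ∈ G.neighborSet c, insert u (G.neighborSet u \ {c})).encard ≤ Δ ^ 2 :=
    calc (⋃ u ∈ G.neighborSet c, insert u (G.neighborSet u \ {c})).encard
        = (⋃ u ∈ hfin.toFinset, insert u (G.neighborSet u \ {c})).encard := by
          simp only [hfin.mem_toFinset]
      _ ≤ ∑ u ∈ hfin.toFinset, (insert u (G.neighborSet u \ {c})).encard :=
          Finset.set_encard_biUnion_le _ _
      _ ≤ hfin.toFinset.card • (Δ : ℕ∞) := Finset.sum_le_card_nsmul _ _ _ fun u hu ↦
          (encard_insert_neighborSet_sdiff_le (hfin.mem_toFinset.1 hu)).trans (hΔ u)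
      _ = (G.neighborSet c).encard * Δ := by rw [nsmul_eq_mul, hfin.encard_eq_coe_toFinset_card]
      _ ≤ Δ ^ 2 := by rw [sq]; gcongr; exact hΔ c
  calc (G.ball c 3).encard
      ≤ (insert c (⋃ u ∈ G.neighborSet c, insert u (G.neighborSet u \ {c}))).encard :=
        Set.encard_le_encard (ball_three_subset c)
    _ ≤ (⋃ u ∈ G.neighborSet c, insert u (G.neighborSet u \ {c})).encard + 1 :=
        Set.encard_insert_le _ _
    _ ≤ Δ ^ 2 + 1 := by gcongr

lemma exists_forall_notMem_ball_three (hΔ : ∀ v, (G.neighborSet v).encard ≤ Δ) (C : Finset V)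
    (hC : C.card * (Δ ^ 2 + 1) < ENat.card V) : ∃ r, ∀ c ∈ C, r ∉ G.ball c 3 := by
  by_contra! hcover
  have huniv : Set.univ ⊆ ⋃ c ∈ C, G.ball c 3 := fun r _ ↦ by
    obtain ⟨c, hc, hr⟩ := hcover r
    exact Set.mem_biUnion hc hr
  refine hC.not_ge ?_
  calc ENat.card V = (Set.univ : Set V).encard := (Set.encard_univ V).symm
    _ ≤ (⋃ c ∈ C, G.ball c 3).encard := Set.encard_le_encard huniv
    _ ≤ ∑ c ∈ C, (G.ball c 3).encard := Finset.set_encard_biUnion_le _ _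
    _ ≤ C.card • ((Δ : ℕ∞) ^ 2 + 1) :=
        Finset.sum_le_card_nsmul _ _ _ fun c _ ↦ encard_ball_three_le hΔ c
    _ = C.card * (Δ ^ 2 + 1) := nsmul_eq_mul _ _

lemma mem_ball_three_of_adj_of_mem_closedNbhd {c v r : V} (hrv : G.Adj r v)
    (hc : c ∈ closedNbhd G v) : r ∈ G.ball c 3 := by
  rw [mem_ball_three_iff]
  rcases hc with rfl | hvc
  · exact Or.inr (Or.inl hrv.symm)
  · exact Or.inr (Or.inr ⟨v, Adj.symm hvc, hrv.symm⟩)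

lemma Trapped.mem_ball_three {c₁ c₂ c₃ r v : V} (h : Trapped G c₁ c₂ c₃ r) (hrv : G.Adj r v) :
    r ∈ G.ball c₁ 3 ∨ r ∈ G.ball c₂ 3 ∨ r ∈ G.ball c₃ 3 := by
  have of_adj {c : V} (hc : G.Adj c r) : r ∈ G.ball c 3 :=
    mem_ball_three_iff.2 (Or.inr (Or.inl hc))
  have of_nbhd {c : V} : c ∈ closedNbhd G v → r ∈ G.ball c 3 :=
    mem_ball_three_of_adj_of_mem_closedNbhd hrv
  rcases h with hadj | hnbhd
  · exact hadj.imp of_adj (Or.imp of_adj of_adj)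
  · exact (hnbhd v hrv).imp of_nbhd (Or.imp of_nbhd of_nbhd)

theorem exists_not_trapped_of_encard_neighborSet_le (hΔ : ∀ v, (G.neighborSet v).encard ≤ Δ)
    (hadj : ∀ v, ∃ w, G.Adj v w) (hcard : 3 * (Δ ^ 2 + 1) < ENat.card V) (c₁ c₂ c₃ : V) :
    ∃ r, r ∉ ({c₁, c₂, c₃} : Set V) ∧ ¬ Trapped G c₁ c₂ c₃ r := by
  classical
  have hcops : ({c₁, c₂, c₃} : Finset V).card * ((Δ : ℕ∞) ^ 2 + 1) < ENat.card V := by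
    refine lt_of_le_of_lt ?_ hcard
    gcongr
    exact_mod_cast Finset.card_le_three
  obtain ⟨r, hr⟩ := exists_forall_notMem_ball_three hΔ {c₁, c₂, c₃} hcops
  refine ⟨r, fun hmem ↦ hr r (by simpa using hmem) (mem_ball_self three_pos), fun htrap ↦ ?_⟩
  obtain ⟨v, hrv⟩ := hadj r
  rcases htrap.mem_ball_three hrv with h | h | h <;> exact hr _ (by simp) h

end BoundedDegree

section GP

variable (n k : ℕ)

lemma GP_adj_spoke (i : ZMod n) : (GP n k).Adj (Sum.inl i) (Sum.inr i) := by
  simp [GP, GPRel]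

lemma exists_GP_adj (v : GPVertex n) : ∃ w, (GP n k).Adj v w := by
  rcases v with i | i
  · exact ⟨Sum.inr i, GP_adj_spoke n k i⟩
  · exact ⟨Sum.inl i, (GP_adj_spoke n k i).symm⟩

lemma GP_neighborSet_inl_subset (i : ZMod n) :
    (GP n k).neighborSet (Sum.inl i) ⊆ {Sum.inl (i + 1), Sum.inl (i - 1), Sum.inr i} := by
  rintro (j | j) h <;> simp_all [GP, GPRel, eq_sub_iff_add_eq, eq_comm]

lemma GP_neighborSet_inr_subset (i : ZMod n) :
    (GP n k).neighborSet (Sum.inr i) ⊆ {Sum.inr (i + k), Sum.inr (i - k), Sum.inl i} := by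
  rintro (j | j) h <;> simp_all [GP, GPRel, eq_sub_iff_add_eq, eq_comm]

lemma GP_encard_neighborSet_le (v : GPVertex n) : ((GP n k).neighborSet v).encard ≤ 3 := by
  rcases v with i | i
  · exact (Set.encard_le_encard (GP_neighborSet_inl_subset n k i)).trans (encard_triple_le _ _ _)
  · exact (Set.encard_le_encard (GP_neighborSet_inr_subset n k i)).trans (encard_triple_le _ _ _)

theorem exists_untrapped_start_GP_general (hn : 16 ≤ n) (c₁ c₂ c₃ : GPVertex n) :
    ∃ r : GPVertex n,
      r ∉ ({c₁, c₂, c₃} : Set (GPVertex n)) ∧ ¬ Trapped (GP n k) c₁ c₂ c₃ r := by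
  have : NeZero n := ⟨by omega⟩
  have hcard : 3 * (((3 : ℕ) : ℕ∞) ^ 2 + 1) < ENat.card (GPVertex n) := by
    rw [ENat.card_eq_coe_fintype_card, Fintype.card_sum, ZMod.card]
    exact_mod_cast (by omega : 3 * (3 ^ 2 + 1) < n + n)
  exact exists_not_trapped_of_encard_neighborSet_le (GP_encard_neighborSet_le n k)
    (exists_GP_adj n k) hcard c₁ c₂ c₃

end GP

/-- Wherever three cops are placed on `GP(n,k)`, the robber has a starting vertex,
not occupied by a cop, at which they are not trapped. -/
theorem exists_untrapped_start_GP (n k : ℕ)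
    (hn : 0 < n) (hk : 0 < k)
    (hi : ∃ i, i ∈ ({1, 2, 3} : Set ℕ) ∧ i * n = 7 * k)
    (h2k : 2 * k < n)
    (hbig : 42 ≤ n ∨ (n = 28 ∧ k = 8) ∨ (n = 35 ∧ k = 10) ∨ (n = 35 ∧ k = 15)) :
    ∀ c₁ c₂ c₃ : GPVertex n, ∃ r : GPVertex n,
      r ∉ ({c₁, c₂, c₃} : Set (GPVertex n)) ∧ ¬ Trapped (GP n k) c₁ c₂ c₃ r := by
  exact exists_untrapped_start_GP_general n k (by omega)
end

section
/- Let n and k be positive integers with i·n = 7k for some i ∈ {1,2,3} and 2k < n, and suppose that either n ≥ 42 or (n,k) ∈ {(28,8),(35,10),(35,15)}. Then for every vertex v of GP(n,k), there are exactly 3 vertices at graph distance 1 from v, exactly 6 vertices at graph distance 2 from v, and exactly 12 vertices at graph distance 3 from v; in particular the ball of radius 3 around v contains exactly 22 vertices. -/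
open SimpleGraph

/-!
Unrolling the outer cycle and the inner cycles of `GP(n,k)` gives a cubic graph on two copies of
`ℤ × ℤ`, from which `GP(n,k)` is recovered by sending `(p, q)` to `p + q k` modulo `n`. This
projection maps balls onto balls, and the balls of radius `0, 1, 2, 3` upstairs have
`1, 4, 10, 22` elements. Two vertices of a ball of radius `3` can only be identified by a short
relation `n ∣ p + q k`. If `i n = 7 k` with `7 ∤ i`, then `n = 7 m` and `k = i m`, so such a
relation forces `m ∣ p`, moreover `7 m ∣ p` if `q = 0` and `7 ∣ q` if `p = 0`; for `m ≥ 4` this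
excludes all short ones but the trivial one.
-/

section Dist

variable {V T : Type*} {G : SimpleGraph V}

lemma dist_le_succ_iff (hG : G.Connected) {u w : V} {r : ℕ} :
    G.dist u w ≤ r + 1 ↔ G.dist u w ≤ r ∨ ∃ v, G.dist u v ≤ r ∧ G.Adj v w := by
  constructor
  · intro h
    obtain ⟨p, hp⟩ := hG.exists_walk_length_eq_dist w u
    rw [dist_comm] at hp
    cases p with
    | nil => simp
    | cons hadj q =>
      rw [Walk.length_cons] at hp
      refine .inr ⟨_, ?_, hadj.symm⟩
      rw [dist_comm]
      exact (dist_le q).trans (by omega)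
  · rintro (h | ⟨v, hv, hadj⟩)
    · exact h.trans r.le_succ
    · calc
        G.dist u w ≤ G.dist u v + G.dist v w := hG.dist_triangle
        _ ≤ r + 1 := add_le_add hv (dist_eq_one_iff_adj.mpr hadj).le

lemma ncard_dist_eq_succ {u : V} {r : ℕ} (hfin : {w | G.dist u w ≤ r + 1}.Finite) :
    {w | G.dist u w = r + 1}.ncard =
      {w | G.dist u w ≤ r + 1}.ncard - {w | G.dist u w ≤ r}.ncard := by
  have hsub : {w | G.dist u w ≤ r} ⊆ {w | G.dist u w ≤ r + 1} := fun w hw ↦ Nat.le_succ_of_le hw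
  rw [← Set.ncard_sdiff hsub (hfin.subset hsub)]
  congr 1
  ext w
  simp only [Set.mem_sdiff, Set.mem_ofPred_eq]
  omega

variable [DecidableEq T]

/-- The elements reached from `t` in at most `r` steps, where each step moves from some `s` to an
element of the finite set `N s`. This is a closed ball that can be computed by evaluation. -/
def stepBall (N : T → Finset T) (t : T) : ℕ → Finset T
  | 0 => {t}
  | r + 1 => stepBall N t r ∪ (stepBall N t r).biUnion N

lemma stepBall_mono (N : T → Finset T) (t : T) : Monotone (stepBall N t) :=
  monotone_nat_of_le_succ fun _ ↦ Finset.subset_union_left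

lemma setOf_dist_le_eq_image_stepBall (hG : G.Connected) {N : T → Finset T} {φ : T → V}
    (hφ : ∀ t, G.neighborSet (φ t) = φ '' N t) (t : T) (r : ℕ) :
    {w | G.dist (φ t) w ≤ r} = φ '' stepBall N t r := by
  induction r with
  | zero =>
    ext w
    simp [stepBall, hG.dist_eq_zero_iff, eq_comm]
  | succ r ih =>
    have hadj (s : T) (w : V) : G.Adj (φ s) w ↔ ∃ s' ∈ N s, φ s' = w := by
      simpa using Set.ext_iff.mp (hφ s) w
    have hball (w : V) : G.dist (φ t) w ≤ r ↔ ∃ s ∈ stepBall N t r, φ s = w := by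
      simpa using Set.ext_iff.mp ih w
    ext w
    simp only [Set.mem_ofPred_eq, dist_le_succ_iff hG, hball, stepBall, Set.mem_image,
      Finset.mem_coe, Finset.mem_union, Finset.mem_biUnion]
    constructor
    · rintro (⟨s, hs, rfl⟩ | ⟨_, ⟨s, hs, rfl⟩, hw⟩)
      · exact ⟨s, .inl hs, rfl⟩
      · obtain ⟨s', hs', rfl⟩ := (hadj s w).mp hw
        exact ⟨s', .inr ⟨s, hs, hs'⟩, rfl⟩
    · rintro ⟨s', hs' | ⟨s, hs, hs'⟩, rfl⟩
      · exact .inl ⟨s', hs', rfl⟩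
      · exact .inr ⟨φ s, ⟨s, hs, rfl⟩, (hadj s _).mpr ⟨s', hs', rfl⟩⟩

end Dist

namespace GP

/-- Vertices of the unrolled generalised Petersen graph, outer ones on the left and inner ones on
the right. The vertex at `(p, q)` lies over the one with subscript `p + q k`. -/
abbrev CoverVertex := (ℤ × ℤ) ⊕ (ℤ × ℤ)

/-- The three neighbours of a vertex in the unrolled generalised Petersen graph: outer edges
change the first coordinate, inner edges the second one. -/
def coverNeighbors : CoverVertex → Finset CoverVertex
  | Sum.inl (p, q) => {Sum.inl (p + 1, q), Sum.inl (p - 1, q), Sum.inr (p, q)}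
  | Sum.inr (p, q) => {Sum.inr (p, q + 1), Sum.inr (p, q - 1), Sum.inl (p, q)}

/-- The two vertices of the unrolled graph at `(0, 0)`, from which it suffices to explore. -/
def coverOrigins : Finset CoverVertex := {Sum.inl 0, Sum.inr 0}

/-- The displacements between vertices on the same side of the unrolled graph that lie in a common
ball of radius `3`: those realised by a walk of length at most `6`, two steps of which change side
if both coordinates move. -/
abbrev IsShort (d : ℤ × ℤ) : Prop :=
  |d.1| + |d.2| ≤ 4 ∨ d.1 = 0 ∧ |d.2| ≤ 6 ∨ d.2 = 0 ∧ |d.1| ≤ 6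

lemma isShort_sub_of_mem_stepBall_three : ∀ o ∈ coverOrigins,
    (∀ y ∈ (stepBall coverNeighbors o 3).toLeft, ∀ z ∈ (stepBall coverNeighbors o 3).toLeft,
      IsShort (y - z)) ∧
    (∀ y ∈ (stepBall coverNeighbors o 3).toRight, ∀ z ∈ (stepBall coverNeighbors o 3).toRight,
      IsShort (y - z)) := by
  decide +kernel

lemma card_stepBall_coverNeighbors : ∀ o ∈ coverOrigins,
    (stepBall coverNeighbors o 0).card = 1 ∧ (stepBall coverNeighbors o 1).card = 4 ∧
    (stepBall coverNeighbors o 2).card = 10 ∧ (stepBall coverNeighbors o 3).card = 22 := by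
  decide +kernel

variable {n k : ℕ}

lemma reachable_of_gpRel {u v : GPVertex n} (h : GPRel n k u v) : (GP n k).Reachable u v := by
  by_cases huv : u = v
  · rw [huv]
  · exact Adj.reachable ((fromRel_adj _ _ _).mpr ⟨huv, .inl h⟩)

lemma connected (n k : ℕ) : (GP n k).Connected := by
  have hstep (x : ZMod n) : (GP n k).Reachable (Sum.inl x) (Sum.inl (x + 1)) :=
    reachable_of_gpRel rfl
  have houter (x : ZMod n) : (GP n k).Reachable (Sum.inl 0) (Sum.inl x) := by
    obtain ⟨j, rfl⟩ := ZMod.intCast_surjective x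
    induction j with
    | zero => rw [Int.cast_zero]
    | succ j ih =>
      rw [Int.cast_add, Int.cast_one]
      exact ih.trans (hstep _)
    | pred j ih =>
      refine ih.trans (Reachable.symm ?_)
      simpa using hstep ((-j - 1 : ℤ) : ZMod n)
  refine (connected_iff_exists_forall_reachable _).mpr ⟨Sum.inl 0, ?_⟩
  rintro (x | x)
  · exact houter x
  · exact (houter x).trans (reachable_of_gpRel rfl)

/-- The subscript modulo `n` below the point `(p, q)` of the unrolled graph, when `(0, 0)` is
placed over `x`. -/
def subscript (k : ℕ) (x : ZMod n) (z : ℤ × ℤ) : ZMod n := x + z.1 + z.2 * k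

/-- The covering projection of the unrolled graph onto `GP(n,k)` that places `(0, 0)` over `x`. -/
def proj (k : ℕ) (x : ZMod n) : CoverVertex → GPVertex n :=
  Sum.map (subscript k x) (subscript k x)

lemma exists_proj_eq (k : ℕ) (v : GPVertex n) : ∃ x, ∃ o ∈ coverOrigins, proj k x o = v := by
  obtain x | x := v
  · exact ⟨x, Sum.inl 0, by simp [coverOrigins], by simp [proj, subscript]⟩
  · exact ⟨x, Sum.inr 0, by simp [coverOrigins], by simp [proj, subscript]⟩

/-- No two distinct vertices of the unrolled graph at a short displacement have the same image in
`GP(n,k)`. For `0 < k` and `2 * k < n` this says that the girth of `GP(n,k)` is at least `7`. -/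
def NoShortRelation (n k : ℕ) : Prop :=
  ∀ d : ℤ × ℤ, IsShort d → (n : ℤ) ∣ d.1 + d.2 * k → d = 0

namespace NoShortRelation

lemma eq_of_subscript_eq (h : NoShortRelation n k) {x : ZMod n} {y z : ℤ × ℤ}
    (hyz : IsShort (y - z)) (heq : subscript k x y = subscript k x z) : y = z := by
  refine sub_eq_zero.mp (h _ hyz ?_)
  rw [← ZMod.intCast_zmod_eq_zero_iff_dvd]
  simp only [subscript] at heq
  push_cast [Prod.fst_sub, Prod.snd_sub]
  linear_combination heq

lemma injOn_proj (h : NoShortRelation n k) (x : ZMod n) {o : CoverVertex}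
    (ho : o ∈ coverOrigins) : Set.InjOn (proj k x) (stepBall coverNeighbors o 3) := by
  obtain ⟨hleft, hright⟩ := isShort_sub_of_mem_stepBall_three o ho
  rintro (y | y) hy (z | z) hz heq
  · exact congrArg Sum.inl <| h.eq_of_subscript_eq
      (hleft y (Finset.mem_toLeft.mpr hy) z (Finset.mem_toLeft.mpr hz)) (Sum.inl_injective heq)
  · cases heq
  · cases heq
  · exact congrArg Sum.inr <| h.eq_of_subscript_eq
      (hright y (Finset.mem_toRight.mpr hy) z (Finset.mem_toRight.mpr hz)) (Sum.inr_injective heq)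

lemma one_ne_zero (h : NoShortRelation n k) : (1 : ZMod n) ≠ 0 := by
  intro h1
  have hdvd : (n : ℤ) ∣ 1 := by simpa using (ZMod.intCast_zmod_eq_zero_iff_dvd 1 n).mp (mod_cast h1)
  exact absurd (h (1, 0) (by decide) (by simpa using hdvd)) (by decide)

lemma natCast_ne_zero (h : NoShortRelation n k) : (k : ZMod n) ≠ 0 := by
  intro hk
  have hdvd : (n : ℤ) ∣ k := (ZMod.intCast_zmod_eq_zero_iff_dvd k n).mp (mod_cast hk)
  exact absurd (h (0, 1) (by decide) (by simpa using hdvd)) (by decide)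

end NoShortRelation

lemma neighborSet_inl (h1 : (1 : ZMod n) ≠ 0) (x : ZMod n) :
    (GP n k).neighborSet (Sum.inl x) = {Sum.inl (x + 1), Sum.inl (x - 1), Sum.inr x} := by
  ext (y | y)
  · have hne : y = x + 1 ∨ y = x - 1 → x ≠ y := by
      rintro (rfl | rfl) <;> simpa [eq_sub_iff_add_eq] using h1
    simpa [GP, GPRel, eq_sub_iff_add_eq, eq_comm (a := x)] using hne
  · simp [GP, GPRel]

lemma neighborSet_inr (hk : (k : ZMod n) ≠ 0) (x : ZMod n) :
    (GP n k).neighborSet (Sum.inr x) = {Sum.inr (x + k), Sum.inr (x - k), Sum.inl x} := by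
  ext (y | y)
  · simp [GP, GPRel, eq_comm]
  · have hne : y = x + k ∨ y = x - k → x ≠ y := by
      rintro (rfl | rfl) <;> simpa [eq_sub_iff_add_eq] using hk
    simpa [GP, GPRel, eq_sub_iff_add_eq, eq_comm (a := x)] using hne

namespace NoShortRelation

lemma neighborSet_proj (h : NoShortRelation n k) (x : ZMod n) (t : CoverVertex) :
    (GP n k).neighborSet (proj k x t) = proj k x '' coverNeighbors t := by
  obtain ⟨p, q⟩ | ⟨p, q⟩ := t
  · have hadd : subscript k x (p + 1, q) = subscript k x (p, q) + 1 := by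
      simp only [subscript]; push_cast; ring
    have hsub : subscript k x (p - 1, q) = subscript k x (p, q) - 1 := by
      simp only [subscript]; push_cast; ring
    simp [proj, coverNeighbors, neighborSet_inl h.one_ne_zero, Set.image_insert_eq, hadd, hsub]
  · have hadd : subscript k x (p, q + 1) = subscript k x (p, q) + k := by
      simp only [subscript]; push_cast; ring
    have hsub : subscript k x (p, q - 1) = subscript k x (p, q) - k := by
      simp only [subscript]; push_cast; ring
    simp [proj, coverNeighbors, neighborSet_inr h.natCast_ne_zero, Set.image_insert_eq, hadd, hsub]

lemma setOf_dist_proj_le (h : NoShortRelation n k) (x : ZMod n) (t : CoverVertex) (r : ℕ) :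
    {w | (GP n k).dist (proj k x t) w ≤ r} = proj k x '' stepBall coverNeighbors t r :=
  setOf_dist_le_eq_image_stepBall (connected n k) (h.neighborSet_proj x) t r

lemma ncard_dist_proj_le (h : NoShortRelation n k) (x : ZMod n) {o : CoverVertex}
    (ho : o ∈ coverOrigins) {r : ℕ} (hr : r ≤ 3) :
    {w | (GP n k).dist (proj k x o) w ≤ r}.ncard = (stepBall coverNeighbors o r).card := by
  have hinj : Set.InjOn (proj k x) (stepBall coverNeighbors o r) :=
    (h.injOn_proj x ho).mono (Finset.coe_subset.mpr (stepBall_mono _ _ hr))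
  rw [h.setOf_dist_proj_le, hinj.ncard_image, Set.ncard_coe_finset]

theorem ball_counts (h : NoShortRelation n k) (v : GPVertex n) :
    {w | (GP n k).dist v w = 1}.ncard = 3 ∧ {w | (GP n k).dist v w = 2}.ncard = 6 ∧
    {w | (GP n k).dist v w = 3}.ncard = 12 ∧ {w | (GP n k).dist v w ≤ 3}.ncard = 22 := by
  obtain ⟨x, o, ho, rfl⟩ := exists_proj_eq k v
  obtain ⟨h0, h1, h2, h3⟩ := card_stepBall_coverNeighbors o ho
  have hfin (r : ℕ) : {w | (GP n k).dist (proj k x o) w ≤ r}.Finite := by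
    rw [h.setOf_dist_proj_le]
    exact (Finset.finite_toSet _).image _
  have hsphere (r : ℕ) (hr : r + 1 ≤ 3) : {w | (GP n k).dist (proj k x o) w = r + 1}.ncard =
      (stepBall coverNeighbors o (r + 1)).card - (stepBall coverNeighbors o r).card := by
    rw [ncard_dist_eq_succ (hfin _), h.ncard_dist_proj_le x ho hr,
      h.ncard_dist_proj_le x ho (r.le_succ.trans hr)]
  refine ⟨?_, ?_, ?_, ?_⟩
  · rw [hsphere 0 (by decide), h1, h0]
  · rw [hsphere 1 (by decide), h2, h1]
  · rw [hsphere 2 (by decide), h3, h2]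
  · rw [h.ncard_dist_proj_le x ho le_rfl, h3]

end NoShortRelation

lemma noShortRelation_seven_mul {m i : ℕ} (hi : ¬ 7 ∣ i) (hm : 4 ≤ m) :
    NoShortRelation (7 * m) (i * m) := by
  rintro ⟨p, q⟩ hshort ⟨c, hc⟩
  push_cast at hc
  have hbound : |p| ≤ 6 ∧ |q| ≤ 6 ∧ (q = 0 ∨ |p| ≤ 3) := by
    dsimp only [IsShort] at hshort
    grind
  obtain ⟨hp6, hq6, rfl | hp3⟩ := hbound
  · have hdvd : 7 * (m : ℤ) ∣ p := ⟨c, by linear_combination hc⟩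
    simpa using Int.eq_zero_of_abs_lt_dvd hdvd (by omega)
  · have hdvd : (m : ℤ) ∣ p := ⟨7 * c - q * i, by linear_combination hc⟩
    obtain rfl : p = 0 := Int.eq_zero_of_abs_lt_dvd hdvd (by omega)
    have hm0 : (m : ℤ) ≠ 0 := by omega
    have hqi : (7 : ℤ) ∣ q * i := ⟨c, mul_left_cancel₀ hm0 (by linear_combination hc)⟩
    have hq : (7 : ℤ) ∣ q :=
      (Int.Prime.dvd_mul' Nat.prime_seven hqi).resolve_right (mod_cast hi)
    simpa using Int.eq_zero_of_abs_lt_dvd hq (by omega)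

end GP

theorem GP_ball_counts_general (n k i : ℕ) (hi : ¬ 7 ∣ i) (hink : i * n = 7 * k) (hn : 28 ≤ n) :
    ∀ v : GPVertex n,
      {w : GPVertex n | (GP n k).dist v w = 1}.ncard = 3 ∧
      {w : GPVertex n | (GP n k).dist v w = 2}.ncard = 6 ∧
      {w : GPVertex n | (GP n k).dist v w = 3}.ncard = 12 ∧
      {w : GPVertex n | (GP n k).dist v w ≤ 3}.ncard = 22 := by
  obtain ⟨m, rfl⟩ : 7 ∣ n := (Nat.prime_seven.dvd_mul.mp ⟨k, hink⟩).resolve_left hi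
  obtain rfl : i * m = k := by linarith
  exact (GP.noShortRelation_seven_mul hi (by omega)).ball_counts

/-- In our families of graphs, every vertex has exactly `3` vertices at distance `1`,
`6` at distance `2`, and `12` at distance `3`; in particular the ball of radius `3`
contains exactly `22` vertices. -/
theorem GP_ball_counts (n k : ℕ)
    (hn : 0 < n) (hk : 0 < k)
    (hi : ∃ i, i ∈ ({1, 2, 3} : Set ℕ) ∧ i * n = 7 * k)
    (h2k : 2 * k < n)
    (hbig : 42 ≤ n ∨ (n = 28 ∧ k = 8) ∨ (n = 35 ∧ k = 10) ∨ (n = 35 ∧ k = 15)) :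
    ∀ v : GPVertex n,
      {w : GPVertex n | (GP n k).dist v w = 1}.ncard = 3 ∧
      {w : GPVertex n | (GP n k).dist v w = 2}.ncard = 6 ∧
      {w : GPVertex n | (GP n k).dist v w = 3}.ncard = 12 ∧
      {w : GPVertex n | (GP n k).dist v w ≤ 3}.ncard = 22 := by
  obtain ⟨i, rfl | rfl | rfl, hink⟩ := hi <;>
    exact GP_ball_counts_general n k _ (by norm_num) hink (by omega)
end
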